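/- arXiv:1307.7438 — 6 statements merged into one kernel-verified Lean document; each statement's English description precedes it below -/
import Mathlib

section
/- Let R̃^+ denote the set of positive roots of Q lying in L, and take β ∈ R̃^+ with Σ_{j=1}^{m^(i)} β_{[i,j]} > 0 for every i ∈ I_irr. Suppose there exists a ∈ J ∪ {vertices of the form [i,j,k]} such that β′ = s_a(β) satisfies β′_{[i,j]} = 0 for all i ∈ I_irr and all j. Then a = 𝐢 for some 𝐢 = ([i,j_i])_{0≤i≤p} ∈ J, and there exist i_0 ∈ {0,…,p} and l ∈ {1,…,e[i_0,j_{i_0}]−1} such that β = ε_𝐢 + ε_{[i_0,j_{i_0},1]} + ⋯ + ε_{[i_0,j_{i_0},l]}; in particular β is a real root of Q. -/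
open Polynomial Matrix BigOperators

namespace DS

noncomputable section

/-- The data of a collection of HTL normal forms `B⁽ⁱ⁾`, `i = 0,…,p`, on `ℂⁿ`:
block counts `m i`, pole orders `kk i`, block sizes `nn i j`, irregular parts
`q i j ∈ s²ℂ[s]` (pairwise distinct, degree ≤ kk i), residue blocks `R i j`,
chosen annihilating eigenvalue lists `ξ i j`, and an identification of
`Σ j, Fin (nn i j)` with `Fin n` (the block decomposition of `ℂⁿ`). -/
structure Setup where
  p : ℕ
  n : ℕ
  hn : 0 < n
  m : Fin (p+1) → ℕ
  hm : ∀ i, 0 < m i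
  kk : Fin (p+1) → ℕ
  hkk : ∀ i, 0 < kk i
  nn : ∀ i : Fin (p+1), Fin (m i) → ℕ
  q : ∀ i : Fin (p+1), Fin (m i) → Polynomial ℂ
  hq0 : ∀ i j, (q i j).coeff 0 = 0
  hq1 : ∀ i j, (q i j).coeff 1 = 0
  hqdeg : ∀ i j, (q i j).natDegree ≤ kk i
  hqdist : ∀ i : Fin (p+1), ∀ j j' : Fin (m i), j ≠ j' → q i j ≠ q i j'
  e : ∀ i : Fin (p+1), Fin (m i) → ℕ
  he : ∀ i j, 0 < e i j
  xi : ∀ (i : Fin (p+1)) (j : Fin (m i)), Fin (e i j) → ℂ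
  R : ∀ (i : Fin (p+1)) (j : Fin (m i)), Matrix (Fin (nn i j)) (Fin (nn i j)) ℂ
  hxi : ∀ i j, (((List.finRange (e i j)).map fun l => R i j - xi i j l • 1).prod) = 0
  emb : ∀ i : Fin (p+1), (Σ j : Fin (m i), Fin (nn i j)) ≃ Fin n
  hreg : ∀ i : Fin (p+1), ¬ (1 < m i ∨ i = 0) → kk i = 1

/-- `i ∈ I_irr` : the indices of irregular singular points together with `0`. -/
def Iirr (S : Setup) (i : Fin (S.p+1)) : Prop := 1 < S.m i ∨ i = 0

instance (S : Setup) : DecidablePred (Iirr S) := fun i =>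
  inferInstanceAs (Decidable (1 < S.m i ∨ i = 0))

/-- Vertices `[i,j]` for `i ∈ I_irr`. -/
abbrev Vb (S : Setup) := Σ i : {i : Fin (S.p+1) // Iirr S i}, Fin (S.m i.1)

/-- Vertices `[i,j,k]` for `0 ≤ i ≤ p`, `1 ≤ j ≤ m⁽ⁱ⁾`, `1 ≤ k ≤ e[i,j]-1`
(the third component `κ` encodes `k = κ+1`). -/
abbrev Vr (S : Setup) := Σ i : Fin (S.p+1), Σ j : Fin (S.m i), Fin (S.e i j - 1)

/-- The vertex set `Q₀` of the quiver `Q`. -/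
abbrev V (S : Setup) := Vb S ⊕ Vr S

/-- `d_i(j,j') = deg (q_j - q_j') - 2`. -/
def dcnt (S : Setup) (i : Fin (S.p+1)) (j j' : Fin (S.m i)) : ℕ :=
  (S.q i j - S.q i j').natDegree - 2

/-- The number of arrows of `Q` from a vertex `a` to a vertex `b`. -/
def arr (S : Setup) : V S → V S → ℕ
  | .inl ⟨i, j⟩, .inl ⟨i', j'⟩ =>
      (if i.1 = 0 ∧ i'.1 ≠ 0 then 1 else 0) +
      (if h : i = i' then
        (if (j : ℕ) < (j' : ℕ) then dcnt S i.1 j (Fin.cast (by rw [h]) j') else 0)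
       else 0)
  | .inl _, .inr _ => 0
  | .inr ⟨i, j, κ⟩, .inl ⟨i', j'⟩ =>
      (if i = i'.1 ∧ (j : ℕ) = (j' : ℕ) ∧ (κ : ℕ) = 0 then 1 else 0) +
      (if ¬ Iirr S i ∧ i'.1 = 0 ∧ (j : ℕ) = 0 ∧ (κ : ℕ) = 0 then 1 else 0)
  | .inr ⟨i, j, κ⟩, .inr ⟨i', j', κ'⟩ =>
      if i = i' ∧ (j : ℕ) = (j' : ℕ) ∧ (κ : ℕ) = (κ' : ℕ) + 1 then 1 else 0

/-- The Euler form `⟨β,γ⟩` of the quiver `Q`. -/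
def eform (S : Setup) (β γ : V S → ℤ) : ℤ :=
  (∑ a : V S, β a * γ a) - ∑ a : V S, ∑ b : V S, (arr S a b : ℤ) * β a * γ b

/-- The symmetrized bilinear form `(β,γ)`. -/
def bform (S : Setup) (β γ : V S → ℤ) : ℤ := eform S β γ + eform S γ β

/-- The quadratic form `q(β)`. -/
def qform (S : Setup) (β : V S → ℤ) : ℤ := eform S β β

/-- `p(β) = 1 - q(β)`. -/
def pform (S : Setup) (β : V S → ℤ) : ℤ := 1 - qform S β

/-- The coordinate vector `ε_a`. -/
def eps (S : Setup) (a : V S) : V S → ℤ := fun b => if b = a then 1 else 0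

/-- The fundamental reflection `s_a`. -/
def refl1 (S : Setup) (a : V S) (β : V S → ℤ) : V S → ℤ :=
  fun b => β b - bform S β (eps S a) * eps S a b

/-- Iterated fundamental reflections (a Weyl group element). -/
def reflList (S : Setup) (l : List (V S)) (β : V S → ℤ) : V S → ℤ :=
  l.foldr (refl1 S) β

/-- The support of a vector. -/
def supp (S : Setup) (β : V S → ℤ) : Set (V S) := {a | β a ≠ 0}

/-- The support of `β` is connected in the underlying graph of `Q`. -/
def connSupp (S : Setup) (β : V S → ℤ) : Prop :=
  ∀ a ∈ supp S β, ∀ b ∈ supp S β,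
    Relation.ReflTransGen
      (fun x y => (0 < arr S x y + arr S y x) ∧ x ∈ supp S β ∧ y ∈ supp S β) a b

/-- The fundamental set of the root system of `Q` (all vertices of `Q` are loop-free). -/
def fund (S : Setup) (β : V S → ℤ) : Prop :=
  β ≠ 0 ∧ (∀ a, 0 ≤ β a) ∧ connSupp S β ∧ ∀ a : V S, bform S β (eps S a) ≤ 0

/-- Real roots of `Q`. -/
def isRealRoot (S : Setup) (β : V S → ℤ) : Prop :=
  ∃ (l : List (V S)) (a : V S), β = reflList S l (eps S a)

/-- Imaginary roots of `Q`. -/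
def isImagRoot (S : Setup) (β : V S → ℤ) : Prop :=
  ∃ (l : List (V S)) (γ : V S → ℤ), (fund S γ ∨ fund S (-γ)) ∧ β = reflList S l γ

/-- Roots of `Q`. -/
def isRoot (S : Setup) (β : V S → ℤ) : Prop := isRealRoot S β ∨ isImagRoot S β

/-- Positive roots of `Q`. -/
def isPosRoot (S : Setup) (β : V S → ℤ) : Prop := isRoot S β ∧ ∀ a, 0 ≤ β a

/-- The index `0` as an element of `I_irr`. -/
def i0 (S : Setup) : {i : Fin (S.p+1) // Iirr S i} := ⟨0, Or.inr rfl⟩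

/-- The vertex `[0,j]`. -/
def v0 (S : Setup) (j : Fin (S.m 0)) : V S := Sum.inl ⟨i0 S, j⟩

/-- The vertex `[i,j]` for `i ∈ I_irr`. -/
def vI (S : Setup) (i : {i : Fin (S.p+1) // Iirr S i}) (j : Fin (S.m i.1)) : V S :=
  Sum.inl ⟨i, j⟩

/-- The lattice `L`: `Σ_j β_[0,j] = Σ_j β_[i,j]` for all `i ∈ I_irr ∖ {0}`. -/
def inL (S : Setup) (β : V S → ℤ) : Prop :=
  ∀ i : {i : Fin (S.p+1) // Iirr S i}, i.1 ≠ 0 →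
    (∑ j : Fin (S.m 0), β (v0 S j)) = ∑ j : Fin (S.m i.1), β (vI S i j)

/-- `L⁺ = L ∩ (ℤ≥0)^{Q₀}`. -/
def inLpos (S : Setup) (β : V S → ℤ) : Prop := inL S β ∧ ∀ a, 0 ≤ β a

/-- The dimension vector `α` (as natural numbers):
`α_[i,j] = n⁽ⁱ⁾_j`, `α_[i,j,k] = rank ∏_{l=1}^k (R⁽ⁱ⁾_j - ξ^{[i,j]}_l)`. -/
noncomputable def alN (S : Setup) : V S → ℕ
  | .inl ⟨i, j⟩ => S.nn i.1 j
  | .inr ⟨i, j, κ⟩ =>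
      ((((List.finRange (S.e i j)).take ((κ : ℕ) + 1)).map
          fun l => S.R i j - S.xi i j l • 1).prod).rank

/-- The dimension vector `α` as an integer vector. -/
noncomputable def alZ (S : Setup) : V S → ℤ := fun a => (alN S a : ℤ)

/-- The parameter `λ ∈ ℂ^{Q₀}`. -/
noncomputable def lam (S : Setup) : V S → ℂ
  | .inl ⟨i, j⟩ =>
      if h : i.1 = 0 then
        (- S.xi 0 (Fin.cast (by rw [h]) j) ⟨0, S.he 0 (Fin.cast (by rw [h]) j)⟩)
          - ∑ i' ∈ Finset.univ.filter (fun i' : Fin (S.p+1) => ¬ Iirr S i'),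
              S.xi i' ⟨0, S.hm i'⟩ ⟨0, S.he i' ⟨0, S.hm i'⟩⟩
      else - S.xi i.1 j ⟨0, S.he i.1 j⟩
  | .inr ⟨i, j, κ⟩ =>
      S.xi i j ⟨(κ : ℕ), by have := κ.2; omega⟩
        - S.xi i j ⟨(κ : ℕ) + 1, by have := κ.2; omega⟩

/-- Pairing `β · μ = Σ_a β_a μ_a` between `ℤ^{Q₀}` and `ℂ^{Q₀}`. -/
noncomputable def dotC (S : Setup) (β : V S → ℤ) (μ : V S → ℂ) : ℂ :=
  ∑ a : V S, (β a : ℂ) * μ a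

/-- `β ∈ R̃⁺_μ` : positive roots of `Q` lying in `L` with `β·μ = 0`. -/
def inRt (S : Setup) (μ : V S → ℂ) (β : V S → ℤ) : Prop :=
  isPosRoot S β ∧ inL S β ∧ dotC S β μ = 0

/-- `β ∈ ℕR̃⁺_μ` : finite sums (including `0`) of elements of `R̃⁺_μ`. -/
def inNRt (S : Setup) (μ : V S → ℂ) (β : V S → ℤ) : Prop :=
  ∃ (r : ℕ) (γ : Fin r → (V S → ℤ)), (∀ t, inRt S μ (γ t)) ∧ β = ∑ t, γ t

/-- `β ∈ Σ̃_μ`. -/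
def inSig (S : Setup) (μ : V S → ℂ) (β : V S → ℤ) : Prop :=
  inRt S μ β ∧ ∀ (r : ℕ), 2 ≤ r → ∀ γ : Fin r → (V S → ℤ),
    (∀ t, inRt S μ (γ t)) → β = ∑ t, γ t → (∑ t, pform S (γ t)) < pform S β

/-! ### The matrix side: truncated orbits.

An element `Σ_{j=1}^{k} A_j x^{-j}` of `𝔤_k*` is encoded as the polynomial matrix
`Σ_{j=1}^{k} A_j x^{k-j}` (of degree `< k`); the coadjoint `G_k`-action becomes
conjugation modulo `x^k` by polynomial matrices with invertible constant term. -/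

abbrev PMat (S : Setup) := Matrix (Fin S.n) (Fin S.n) (Polynomial ℂ)

/-- All entries have degree `< k`. -/
def degLT (S : Setup) (k : ℕ) (A : PMat S) : Prop :=
  ∀ a b, (A a b).degree < (k : ℕ)

/-- The HTL normal form `B⁽ⁱ⁾`, in the polynomial encoding. -/
noncomputable def Bmat (S : Setup) (i : Fin (S.p+1)) : PMat S :=
  Matrix.of fun a b =>
    if h : ((S.emb i).symm a).1 = ((S.emb i).symm b).1 then
      (if Fin.cast (by rw [h]) ((S.emb i).symm a).2 = ((S.emb i).symm b).2 then
          Polynomial.reflect (S.kk i) (S.q i ((S.emb i).symm b).1)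
        else 0)
        + Polynomial.C
            (S.R i ((S.emb i).symm b).1 (Fin.cast (by rw [h]) ((S.emb i).symm a).2)
              ((S.emb i).symm b).2)
          * Polynomial.X ^ (S.kk i - 1)
    else 0

/-- Membership in the truncated orbit `𝒪_{B⁽ⁱ⁾}`. -/
def inOrbit (S : Setup) (i : Fin (S.p+1)) (A : PMat S) : Prop :=
  degLT S (S.kk i) A ∧
  ∃ g : PMat S, IsUnit (g.map fun r => r.coeff 0) ∧
    ∀ a b, (Polynomial.X ^ (S.kk i) : Polynomial ℂ) ∣ (g * Bmat S i - A * g) a b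

/-- The residue matrix `A⁽ⁱ⁾₁`. -/
def resMat (S : Setup) (i : Fin (S.p+1)) (A : PMat S) : Matrix (Fin S.n) (Fin S.n) ℂ :=
  Matrix.of fun a b => (A a b).coeff (S.kk i - 1)

/-- `(A⁽ⁱ⁾)_{0≤i≤p} ∈ ∏ 𝒪_{B⁽ⁱ⁾}` with `Σ A⁽ⁱ⁾₁ = 0`. -/
def isDSElem (S : Setup) (A : ∀ _ : Fin (S.p+1), PMat S) : Prop :=
  (∀ i, inOrbit S i (A i)) ∧ (∑ i, resMat S i (A i)) = 0

/-- Irreducibility of the collection of all coefficient matrices `A⁽ⁱ⁾_j`. -/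
def irredTuple (S : Setup) (A : ∀ _ : Fin (S.p+1), PMat S) : Prop :=
  ∀ W : Submodule ℂ (Fin S.n → ℂ),
    (∀ (i : Fin (S.p+1)) (l : ℕ), ∀ v ∈ W,
        (Matrix.of fun a b => (A i a b).coeff l).mulVec v ∈ W) →
    W = ⊥ ∨ W = ⊤

/-! ### Representations of the double quiver -/

/-- A representation of the double quiver `Q̄` with dimension vector `β`:
`f a b ρ` is the matrix of `ψ_ρ : ℂ^{β a} → ℂ^{β b}` and `g a b ρ` the matrix of
`ψ_{ρ*} : ℂ^{β b} → ℂ^{β a}`, for the `ρ`-th arrow `a → b` of `Q`. -/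
structure Rep (S : Setup) (β : V S → ℕ) where
  f : ∀ a b : V S, Fin (arr S a b) → Matrix (Fin (β b)) (Fin (β a)) ℂ
  g : ∀ a b : V S, Fin (arr S a b) → Matrix (Fin (β a)) (Fin (β b)) ℂ

/-- The moment map at a vertex `c`. -/
noncomputable def moment (S : Setup) {β : V S → ℕ} (M : Rep S β) (c : V S) :
    Matrix (Fin (β c)) (Fin (β c)) ℂ :=
  (∑ a : V S, ∑ ρ : Fin (arr S a c), M.f a c ρ * M.g a c ρ)
    - ∑ b : V S, ∑ ρ : Fin (arr S c b), M.g c b ρ * M.f c b ρ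

/-- `M ∈ Rep(Q̄,β)_μ`. -/
def onMu (S : Setup) {β : V S → ℕ} (μ : V S → ℂ) (M : Rep S β) : Prop :=
  ∀ c : V S, moment S M c = μ c • (1 : Matrix (Fin (β c)) (Fin (β c)) ℂ)

/-- The block matrix `(ψ_{ρ^{[0,j]}_{[i,j']}})_{j,j'}` for `i ∈ I_irr ∖ {0}`. -/
noncomputable def crossMat (S : Setup) {β : V S → ℕ} (M : Rep S β)
    (i : {i : Fin (S.p+1) // Iirr S i}) :
    Matrix (Σ j' : Fin (S.m i.1), Fin (β (vI S i j'))) (Σ j : Fin (S.m 0), Fin (β (v0 S j))) ℂ :=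
  Matrix.of fun x y =>
    if h : 0 < arr S (v0 S y.1) (vI S i x.1) then
      M.f (v0 S y.1) (vI S i x.1) ⟨0, h⟩ x.2 y.2
    else 0

/-- All the block matrices `(ψ_{ρ^{[0,j]}_{[i,j']}})` for `i ∈ I_irr ∖ {0}` are invertible. -/
def crossBij (S : Setup) {β : V S → ℕ} (M : Rep S β) : Prop :=
  ∀ i : {i : Fin (S.p+1) // Iirr S i}, i.1 ≠ 0 →
    Function.Bijective ((crossMat S M i).mulVec)

/-- The combined map `(ψ_{ρ^{[i,1,1]}_{[0,j]}})_j : ℂ^{β [i,1,1]} → ⊕_j ℂ^{β [0,j]}`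
(for `i ∈ I_reg`). -/
noncomputable def regMatF (S : Setup) {β : V S → ℕ} (M : Rep S β)
    (i : Fin (S.p+1)) (j : Fin (S.m i)) (κ : Fin (S.e i j - 1)) :
    Matrix (Σ j' : Fin (S.m 0), Fin (β (v0 S j'))) (Fin (β (Sum.inr ⟨i, j, κ⟩))) ℂ :=
  Matrix.of fun x y =>
    if h : 0 < arr S (Sum.inr ⟨i, j, κ⟩) (v0 S x.1) then
      M.f (Sum.inr ⟨i, j, κ⟩) (v0 S x.1) ⟨0, h⟩ x.2 y
    else 0

/-- The combined map `(ψ_{(ρ^{[i,1,1]}_{[0,j]})*})_j : ⊕_j ℂ^{β [0,j]} → ℂ^{β [i,1,1]}`. -/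
noncomputable def regMatG (S : Setup) {β : V S → ℕ} (M : Rep S β)
    (i : Fin (S.p+1)) (j : Fin (S.m i)) (κ : Fin (S.e i j - 1)) :
    Matrix (Fin (β (Sum.inr ⟨i, j, κ⟩))) (Σ j' : Fin (S.m 0), Fin (β (v0 S j'))) ℂ :=
  Matrix.of fun y x =>
    if h : 0 < arr S (Sum.inr ⟨i, j, κ⟩) (v0 S x.1) then
      M.g (Sum.inr ⟨i, j, κ⟩) (v0 S x.1) ⟨0, h⟩ y x.2
    else 0

/-- `M ∈ Rep(Q̄,β)_μ^{dif}` (the open conditions). -/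
def difCond (S : Setup) {β : V S → ℕ} (M : Rep S β) : Prop :=
  crossBij S M ∧
  (∀ (i : Fin (S.p+1)), ¬ Iirr S i → ∀ (j : Fin (S.m i)) (κ : Fin (S.e i j - 1)),
      (κ : ℕ) = 0 →
      Function.Injective ((regMatF S M i j κ).mulVec) ∧
      Function.Surjective ((regMatG S M i j κ).mulVec)) ∧
  (∀ (i : Fin (S.p+1)) (j : Fin (S.m i)) (κ : Fin (S.e i j - 1)) (b : V S)
      (ρ : Fin (arr S (Sum.inr ⟨i, j, κ⟩) b)),
      (¬ Iirr S i ∧ (κ : ℕ) = 0) ∨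
      (Function.Injective ((M.f (Sum.inr ⟨i, j, κ⟩) b ρ).mulVec) ∧
       Function.Surjective ((M.g (Sum.inr ⟨i, j, κ⟩) b ρ).mulVec)))

/-- A family of subspaces forming a subrepresentation of `M`. -/
def isSubrep (S : Setup) {β : V S → ℕ} (M : Rep S β)
    (W : ∀ a : V S, Submodule ℂ (Fin (β a) → ℂ)) : Prop :=
  ∀ (a b : V S) (ρ : Fin (arr S a b)),
    (∀ v ∈ W a, (M.f a b ρ).mulVec v ∈ W b) ∧ (∀ v ∈ W b, (M.g a b ρ).mulVec v ∈ W a)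

/-- Irreducibility of a representation. -/
def irredRep (S : Setup) {β : V S → ℕ} (M : Rep S β) : Prop :=
  ∀ W, isSubrep S M W → (∀ a, W a = ⊥) ∨ (∀ a, W a = ⊤)

/-- A dimension vector is balanced if `Σ_j γ_[0,j] = Σ_j γ_[i,j]` for all `i ∈ I_irr∖{0}`. -/
def balanced (S : Setup) (γ : V S → ℕ) : Prop :=
  ∀ i : {i : Fin (S.p+1) // Iirr S i}, i.1 ≠ 0 →
    (∑ j : Fin (S.m 0), γ (v0 S j)) = ∑ j : Fin (S.m i.1), γ (vI S i j)

/-- Quasi-irreducibility: no nontrivial proper subrepresentation with balanced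
dimension vector. -/
def quasiIrred (S : Setup) {β : V S → ℕ} (M : Rep S β) : Prop :=
  ∀ W, isSubrep S M W → balanced S (fun a => Module.finrank ℂ (W a)) →
    (∀ a, W a = ⊥) ∨ (∀ a, W a = ⊤)

/-- Simultaneous conjugation of representations by `∏_a GL(β_a, ℂ)`. -/
def repConj (S : Setup) {β : V S → ℕ} (M N : Rep S β) : Prop :=
  ∃ g : ∀ a : V S, (Matrix (Fin (β a)) (Fin (β a)) ℂ)ˣ,
    (∀ a b ρ, N.f a b ρ = ((g b).val * M.f a b ρ) * ((g a)⁻¹).val) ∧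
    (∀ a b ρ, N.g a b ρ = ((g a).val * M.g a b ρ) * ((g b)⁻¹).val)

/-- Simultaneous conjugation of tuples by `GL(n, ℂ)`. -/
def tupConj (S : Setup) (A A' : ∀ _ : Fin (S.p+1), PMat S) : Prop :=
  ∃ g : (Matrix (Fin S.n) (Fin S.n) ℂ)ˣ,
    ∀ i, A' i = (g.val.map Polynomial.C) * A i * ((g⁻¹).val.map Polynomial.C)

/-- Carrier of the moduli space `ℳ*_{st}(𝐁)`. -/
abbrev MstC (S : Setup) := {A : ∀ _ : Fin (S.p+1), PMat S // isDSElem S A ∧ irredTuple S A}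

/-- The moduli space `ℳ*_{st}(𝐁)` of stable connections, identified with conjugacy
classes of irreducible elements of `∏ 𝒪_{B⁽ⁱ⁾}` with vanishing residue sum. -/
abbrev Mst (S : Setup) := Quot (fun A A' : MstC S => tupConj S A.1 A'.1)

abbrev DSC (S : Setup) := {A : ∀ _ : Fin (S.p+1), PMat S // isDSElem S A}

abbrev DSQ (S : Setup) := Quot (fun A A' : DSC S => tupConj S A.1 A'.1)

abbrev RepIrrC (S : Setup) (μ : V S → ℂ) :=
  {M : Rep S (alN S) // onMu S μ M ∧ irredRep S M}

/-- The quiver variety `𝔐^{reg}_μ(Q,α)`. -/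
abbrev Mreg (S : Setup) (μ : V S → ℂ) :=
  Quot (fun M N : RepIrrC S μ => repConj S M.1 N.1)

abbrev DifC (S : Setup) (μ : V S → ℂ) :=
  {M : Rep S (alN S) // onMu S μ M ∧ difCond S M}

abbrev DifQ (S : Setup) (μ : V S → ℂ) :=
  Quot (fun M N : DifC S μ => repConj S M.1 N.1)

abbrev QIC (S : Setup) (μ : V S → ℂ) :=
  {M : Rep S (alN S) // onMu S μ M ∧ quasiIrred S M ∧ crossBij S M}

abbrev QIQ (S : Setup) (μ : V S → ℂ) :=
  Quot (fun M N : QIC S μ => repConj S M.1 N.1)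

/-! ### `J`, `ε_𝐢`, and the equivalence relation `∼` -/

/-- `ε_𝐢 = Σ_{i ∈ I_irr} ε_{[i,j_i]}` for `𝐢 = ([i,j_i]) ∈ 𝒥`. -/
def epsJ (S : Setup) (I : ∀ i : Fin (S.p+1), Fin (S.m i)) : V S → ℤ
  | .inl ⟨i, j⟩ => if (j : ℕ) = (I i.1 : ℕ) then 1 else 0
  | .inr _ => 0

/-- The reflection `s_𝐢`. -/
def sJ (S : Setup) (I : ∀ i : Fin (S.p+1), Fin (S.m i)) (β : V S → ℤ) : V S → ℤ :=
  fun b => β b - bform S β (epsJ S I) * epsJ S I b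

/-- The quasi-fundamental set `F̃`. -/
def quasiFund (S : Setup) (β : V S → ℤ) : Prop :=
  inL S β ∧ (∀ a, 0 ≤ β a) ∧ β ≠ 0 ∧
  (∀ I : ∀ i : Fin (S.p+1), Fin (S.m i), bform S β (epsJ S I) ≤ 0) ∧
  (∀ (i : Fin (S.p+1)) (j : Fin (S.m i)) (κ : Fin (S.e i j - 1)),
      bform S β (eps S (Sum.inr ⟨i, j, κ⟩)) ≤ 0) ∧
  connSupp S β

/-- `μ_𝐢 = Σ_{i ∈ I_irr} μ_{[i,j_i]}`. -/
noncomputable def muJ (S : Setup) (I : ∀ i : Fin (S.p+1), Fin (S.m i)) (μ : V S → ℂ) : ℂ :=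
  ∑ i : {i : Fin (S.p+1) // Iirr S i}, μ (vI S i (I i.1))

/-- The transformed parameter `μ'` in the move `s_𝐢` on pairs. -/
noncomputable def muMove (S : Setup) (I : ∀ i : Fin (S.p+1), Fin (S.m i)) (μ : V S → ℂ) :
    V S → ℂ := fun a =>
  match a with
  | .inl ⟨i, j⟩ =>
      if i.1 = 0 ∧ (j : ℕ) = (I 0 : ℕ) then μ a - 2 * muJ S I μ else μ a
  | .inr ⟨i, j, κ⟩ =>
      if j = I i ∧ (κ : ℕ) = 0 then μ a + muJ S I μ else μ a

/-- The reflected parameter `r_a(μ)` for a vertex `a`. -/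
noncomputable def rvtx (S : Setup) (a : V S) (μ : V S → ℂ) : V S → ℂ :=
  fun b => μ b - ((bform S (eps S a) (eps S b) : ℤ) : ℂ) * μ a

/-- One move generating the relation `∼` on pairs `(β,μ)`. -/
def stepRel (S : Setup) :
    ((V S → ℤ) × (V S → ℂ)) → ((V S → ℤ) × (V S → ℂ)) → Prop := fun x y =>
  (∃ (i : Fin (S.p+1)) (j : Fin (S.m i)) (κ : Fin (S.e i j - 1)),
      x.2 (Sum.inr ⟨i, j, κ⟩) ≠ 0 ∧
      y = (refl1 S (Sum.inr ⟨i, j, κ⟩) x.1, rvtx S (Sum.inr ⟨i, j, κ⟩) x.2)) ∨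
  (∃ I : ∀ i : Fin (S.p+1), Fin (S.m i),
      muJ S I x.2 ≠ 0 ∧ y = (sJ S I x.1, muMove S I x.2))

/-- The smallest equivalence relation `∼` containing all the moves. -/
def pairEquiv (S : Setup) :
    ((V S → ℤ) × (V S → ℂ)) → ((V S → ℤ) × (V S → ℂ)) → Prop :=
  Relation.EqvGen (stepRel S)

/-- The vector `z^{(i₀)}` for `i₀ ∈ I_irr ∖ {0}`. -/
def zvec (S : Setup) (i' : Fin (S.p+1)) : V S → ℂ
  | .inl ⟨i, _⟩ => if i.1 = i' then 1 else if i.1 = 0 then -1 else 0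
  | .inr _ => 0

/-! A reflection preserves the quadratic form `q`, so `γ = s_𝐢(β)` again satisfies `q(γ) ≤ 1`, while
`(γ, ε_𝐢) = -(β, ε_𝐢) < 0`. As `γ` vanishes at all vertices `[i,j]`, it lives on the disjoint union
of the legs `[i,j,1], [i,j,2], …`, which are Dynkin diagrams of type `A`. There `q` is positive
definite, and its vectors of value at most one with a positive first coordinate are
`ε_{[i,j,1]} + ⋯ + ε_{[i,j,l]}`. Finally `-(γ, ε_𝐢)` is the sum of the coordinates of `γ` at the
vertices `[i,j_i,1]`, which identifies the leg and shows `(β, ε_𝐢) = 1`. -/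

theorem eq_of_forall_eq_succ {α : Type*} {x : ℕ → α} {a b : ℕ} (hab : a ≤ b)
    (h : ∀ k, a ≤ k → k < b → x k = x (k + 1)) : x a = x b := by
  induction b, hab using Nat.le_induction with
  | base => rfl
  | succ b hab ih => exact (ih fun k hak hkb => h k hak (by omega)).trans (h b hab (by omega))

/-- The Tits form `x₀² + ⋯ + x_{N-1}² - x₀x₁ - ⋯ - x_{N-2}x_{N-1}` of the Dynkin diagram of type
`A_N`, written for the sequences `x` with `x N = 0`. -/
def pathForm {R : Type*} [CommRing R] (N : ℕ) (x : ℕ → R) : R :=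
  ∑ k ∈ Finset.range N, x k * (x k - x (k + 1))

theorem two_mul_pathForm_add_sq {R : Type*} [CommRing R] (N : ℕ) (x : ℕ → R) :
    2 * pathForm N x + x N ^ 2 = x 0 ^ 2 + ∑ k ∈ Finset.range N, (x k - x (k + 1)) ^ 2 := by
  induction N with
  | zero => simp [pathForm]
  | succ N ih =>
    rw [pathForm] at ih ⊢
    rw [Finset.sum_range_succ, Finset.sum_range_succ]
    linear_combination ih

section OrderedRing

variable {R : Type*} [CommRing R] [LinearOrder R] [IsStrictOrderedRing R] {N : ℕ} {x : ℕ → R}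

theorem pathForm_nonneg (hN : x N = 0) : 0 ≤ pathForm N x := by
  have hsum : 0 ≤ ∑ k ∈ Finset.range N, (x k - x (k + 1)) ^ 2 :=
    Finset.sum_nonneg fun _ _ => sq_nonneg _
  nlinarith [two_mul_pathForm_add_sq N x, sq_nonneg (x 0)]

theorem eq_zero_of_pathForm_nonpos (hN : x N = 0) (h : pathForm N x ≤ 0) {k : ℕ} (hk : k ≤ N) :
    x k = 0 := by
  have hsum : ∑ k ∈ Finset.range N, (x k - x (k + 1)) ^ 2 ≤ 0 := by
    nlinarith [two_mul_pathForm_add_sq N x, sq_nonneg (x 0)]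
  have hconst : ∀ i < N, x i = x (i + 1) := fun i hi => by
    have hle := Finset.single_le_sum (f := fun k => (x k - x (k + 1)) ^ 2)
      (fun _ _ => sq_nonneg _) (Finset.mem_range.2 hi)
    exact sub_eq_zero.1 (pow_eq_zero_iff two_ne_zero |>.1 ((hle.trans hsum).antisymm (sq_nonneg _)))
  rw [eq_of_forall_eq_succ hk fun i _ hi => hconst i hi, hN]

end OrderedRing

theorem exists_eq_ite_of_sum_sq_sub_le_one {N : ℕ} {x : ℕ → ℤ} (hN : x N ≠ x 0)
    (h : ∑ k ∈ Finset.range N, (x k - x (k + 1)) ^ 2 ≤ 1) :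
    ∃ l, 1 ≤ l ∧ l ≤ N ∧ ∀ k ≤ N, x k = if k < l then x 0 else x N := by
  obtain ⟨a, haN, ha⟩ : ∃ a < N, x a ≠ x (a + 1) := by
    by_contra! hconst
    exact hN (eq_of_forall_eq_succ N.zero_le fun k _ hk => hconst k hk).symm
  have hconst : ∀ k < N, k ≠ a → x k = x (k + 1) := by
    intro k hkN hka
    by_contra hk
    have hpair := Finset.sum_le_sum_of_subset_of_nonneg
      (f := fun k => (x k - x (k + 1)) ^ 2) (s := {k, a}) (t := Finset.range N)
      (by simp [Finset.insert_subset_iff, hkN, haN]) (fun _ _ _ => sq_nonneg _)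
    rw [Finset.sum_pair hka] at hpair
    have := sq_pos_of_ne_zero (sub_ne_zero.2 hk)
    have := sq_pos_of_ne_zero (sub_ne_zero.2 ha)
    omega
  refine ⟨a + 1, by omega, haN, fun k hk => ?_⟩
  split_ifs with hka
  · exact (eq_of_forall_eq_succ k.zero_le fun i _ hi => hconst i (by omega) (by omega)).symm
  · exact eq_of_forall_eq_succ hk fun i hi hiN => hconst i hiN (by omega)

theorem exists_eq_ite_of_pathForm_le_one {N : ℕ} {x : ℕ → ℤ} (hN : x N = 0) (h0 : 0 < x 0)
    (h : pathForm N x ≤ 1) : ∃ l, 1 ≤ l ∧ l ≤ N ∧ ∀ k ≤ N, x k = if k < l then 1 else 0 := by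
  have hform := two_mul_pathForm_add_sq N x
  rw [hN] at hform
  have hsum : 0 ≤ ∑ k ∈ Finset.range N, (x k - x (k + 1)) ^ 2 :=
    Finset.sum_nonneg fun _ _ => sq_nonneg _
  have hx0 : x 0 = 1 := by nlinarith
  rw [hx0] at hform
  simpa only [hx0, hN] using
    exists_eq_ite_of_sum_sq_sub_le_one (x := x) (N := N) (by omega) (by linarith)

section BilinForm

variable {R M : Type*} [CommRing R] [AddCommGroup M] [Module R M] {B : LinearMap.BilinForm R M}
  {v : M}

theorem apply_self_sub_smul (hv : B v v = 1) (x : M) :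
    B (x - (B x v + B v x) • v) (x - (B x v + B v x) • v) = B x x := by
  simp only [map_sub, map_smul, LinearMap.sub_apply, LinearMap.smul_apply, smul_eq_mul, hv]
  ring

theorem apply_sub_smul_add_apply_sub_smul (hv : B v v = 1) (x : M) :
    B (x - (B x v + B v x) • v) v + B v (x - (B x v + B v x) • v) = -(B x v + B v x) := by
  simp only [map_sub, map_smul, LinearMap.sub_apply, LinearMap.smul_apply, smul_eq_mul, hv]
  ring

end BilinForm

section Quiver

variable {S : Setup}

/-- The Euler form `eform` as a bilinear map, with Gram matrix `(δ_ab - #{arrows a → b})`. -/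
def eulerForm (S : Setup) : LinearMap.BilinForm ℤ (V S → ℤ) :=
  Matrix.toBilin' (1 - Matrix.of fun a b => (arr S a b : ℤ))

theorem eulerForm_apply (β γ : V S → ℤ) : eulerForm S β γ = eform S β γ := by
  simp only [eulerForm, Matrix.toBilin'_apply, eform, Matrix.sub_apply, Matrix.one_apply,
    Matrix.of_apply, mul_sub, sub_mul, Finset.sum_sub_distrib]
  congr 1
  · simp
  · exact Finset.sum_congr rfl fun _ _ => Finset.sum_congr rfl fun _ _ => by ring

theorem bform_eq_eulerForm (β γ : V S → ℤ) :
    bform S β γ = eulerForm S β γ + eulerForm S γ β := by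
  rw [bform, eulerForm_apply, eulerForm_apply]

theorem qform_eq_eulerForm (β : V S → ℤ) : qform S β = eulerForm S β β :=
  (eulerForm_apply β β).symm

theorem eps_eq_single (a : V S) : eps S a = Pi.single a 1 := by
  funext b
  simp [eps, Pi.single_apply]

theorem eulerForm_eps_eps (a b : V S) :
    eulerForm S (eps S a) (eps S b) = (if a = b then 1 else 0) - arr S a b := by
  simp [eulerForm, eps_eq_single, Matrix.toBilin'_single, Matrix.one_apply]

theorem bform_eps (β : V S → ℤ) (a : V S) :
    bform S β (eps S a) = 2 * β a - ∑ b, (arr S a b + arr S b a) * β b := by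
  simp only [bform, eform, eps, add_mul, Finset.sum_add_distrib]
  simp
  ring

theorem sum_mul_bform_eps (β γ : V S → ℤ) : ∑ a, γ a * bform S β (eps S a) = bform S β γ := by
  conv_rhs => rw [pi_eq_sum_univ' γ]
  simp only [bform_eq_eulerForm, eps_eq_single, map_sum, map_smul, LinearMap.sum_apply,
    LinearMap.smul_apply, smul_eq_mul, ← Finset.sum_add_distrib, mul_add]

theorem qform_sub_bform_smul {v : V S → ℤ} (hv : qform S v = 1) (β : V S → ℤ) :
    qform S (β - bform S β v • v) = qform S β := by
  simp only [bform_eq_eulerForm, qform_eq_eulerForm] at hv ⊢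
  exact apply_self_sub_smul hv β

theorem bform_sub_bform_smul {v : V S → ℤ} (hv : qform S v = 1) (β : V S → ℤ) :
    bform S (β - bform S β v • v) v = -bform S β v := by
  simp only [bform_eq_eulerForm, qform_eq_eulerForm] at hv ⊢
  exact apply_sub_smul_add_apply_sub_smul hv β

theorem qform_neg (β : V S → ℤ) : qform S (-β) = qform S β := by
  simp [qform_eq_eulerForm]

theorem arr_self (a : V S) : arr S a a = 0 := by
  rcases a with ⟨i, j⟩ | ⟨i, j, k⟩ <;> simp [arr]

theorem qform_eps (a : V S) : qform S (eps S a) = 1 := by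
  simp [qform_eq_eulerForm, eulerForm_eps_eps, arr_self]

theorem qform_reflList (l : List (V S)) (β : V S → ℤ) : qform S (reflList S l β) = qform S β := by
  induction l with
  | nil => rfl
  | cons a l ih => exact (qform_sub_bform_smul (qform_eps a) _).trans ih

theorem qform_nonpos_of_fund {γ : V S → ℤ} (h : fund S γ) : qform S γ ≤ 0 := by
  obtain ⟨-, hnonneg, -, hbform⟩ := h
  have hsum : ∑ a, γ a * bform S γ (eps S a) ≤ 0 :=
    Finset.sum_nonpos fun a _ => mul_nonpos_of_nonneg_of_nonpos (hnonneg a) (hbform a)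
  rw [sum_mul_bform_eps, bform] at hsum
  rw [qform]
  linarith

theorem isImagRoot.qform_nonpos {β : V S → ℤ} (h : isImagRoot S β) : qform S β ≤ 0 := by
  obtain ⟨l, γ, hγ | hγ, rfl⟩ := h <;> rw [qform_reflList]
  · exact qform_nonpos_of_fund hγ
  · exact qform_neg γ ▸ qform_nonpos_of_fund hγ

theorem isRealRoot.qform_eq_one {β : V S → ℤ} (h : isRealRoot S β) : qform S β = 1 := by
  obtain ⟨l, a, rfl⟩ := h
  rw [qform_reflList, qform_eps]

theorem isRoot.qform_le_one {β : V S → ℤ} (h : isRoot S β) : qform S β ≤ 1 :=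
  h.elim (fun hreal => hreal.qform_eq_one.le) fun himag => himag.qform_nonpos.trans zero_le_one

theorem isRoot.isRealRoot_of_qform_pos {β : V S → ℤ} (h : isRoot S β) (hq : 0 < qform S β) :
    isRealRoot S β :=
  h.resolve_right fun himag => himag.qform_nonpos.not_gt hq

theorem epsJ_eq_sum_eps (I : ∀ i, Fin (S.m i)) :
    epsJ S I = ∑ i : {i // Iirr S i}, eps S (vI S i (I i)) := by
  funext a
  rw [Finset.sum_apply]
  rcases a with ⟨i, j⟩ | x
  · rw [Finset.sum_eq_single i (fun i' _ hne => ?_) (by simp)]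
    · simp [epsJ, eps, vI, Fin.ext_iff]
    · simp [eps, vI, hne.symm]
  · simp [epsJ, eps, vI]

theorem arr_vI_vI (I : ∀ i, Fin (S.m i)) (i i' : {i // Iirr S i}) :
    arr S (vI S i (I i)) (vI S i' (I i')) = if i = i0 S ∧ i' ≠ i0 S then 1 else 0 := by
  have hzero : ∀ k : {i // Iirr S i}, k.1 = 0 ↔ k = i0 S := fun k =>
    (Subtype.ext_iff (a2 := i0 S)).symm
  simp only [arr, vI, hzero, ne_eq]
  by_cases h : i = i'
  · subst h
    simp
  · simp [h]

theorem qform_epsJ (I : ∀ i, Fin (S.m i)) : qform S (epsJ S I) = 1 := by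
  have hcol : ∀ i' : {i // Iirr S i}, ∑ i : {i // Iirr S i},
      eulerForm S (eps S (vI S i (I i))) (eps S (vI S i' (I i'))) =
        if i' = i0 S then 1 else 0 := by
    intro i'
    have hvI : ∀ i : {i // Iirr S i}, vI S i (I i) = vI S i' (I i') ↔ i = i' := fun i =>
      ⟨fun h => congrArg Sigma.fst (Sum.inl_injective h), fun h => h ▸ rfl⟩
    simp only [eulerForm_eps_eps, arr_vI_vI, hvI, Finset.sum_sub_distrib]
    by_cases h : i' = i0 S <;> simp [h]
  simp [qform_eq_eulerForm, epsJ_eq_sum_eps, map_sum, LinearMap.sum_apply, hcol]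

theorem sJ_eq_sub_smul (I : ∀ i, Fin (S.m i)) (β : V S → ℤ) :
    sJ S I β = β - bform S β (epsJ S I) • epsJ S I := rfl

theorem qform_sJ (I : ∀ i, Fin (S.m i)) (β : V S → ℤ) : qform S (sJ S I β) = qform S β :=
  qform_sub_bform_smul (qform_epsJ I) β

theorem bform_sJ_epsJ (I : ∀ i, Fin (S.m i)) (β : V S → ℤ) :
    bform S (sJ S I β) (epsJ S I) = -bform S β (epsJ S I) :=
  bform_sub_bform_smul (qform_epsJ I) β

/-- The coordinates of `γ` along the leg `[i,j,1], [i,j,2], …`, extended by zero; the entry at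
`k` is `γ_{[i,j,k+1]}`. -/
def legCoord (γ : V S → ℤ) (i : Fin (S.p + 1)) (j : Fin (S.m i)) (k : ℕ) : ℤ :=
  if h : k < S.e i j - 1 then γ (Sum.inr ⟨i, j, ⟨k, h⟩⟩) else 0

theorem legCoord_val (γ : V S → ℤ) {i : Fin (S.p + 1)} {j : Fin (S.m i)}
    (κ : Fin (S.e i j - 1)) : legCoord γ i j κ = γ (Sum.inr ⟨i, j, κ⟩) :=
  dif_pos κ.2

theorem legCoord_length (γ : V S → ℤ) (i : Fin (S.p + 1)) (j : Fin (S.m i)) :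
    legCoord γ i j (S.e i j - 1) = 0 :=
  dif_neg (lt_irrefl _)

theorem sum_ite_val_eq (γ : V S → ℤ) (i : Fin (S.p + 1)) (j : Fin (S.m i)) (k : ℕ) :
    ∑ κ : Fin (S.e i j - 1), (if (κ : ℕ) = k then γ (Sum.inr ⟨i, j, κ⟩) else 0) =
      legCoord γ i j k := by
  rw [legCoord]
  split_ifs with hk
  · simp [← Fin.ext_iff (b := ⟨k, hk⟩)]
  · exact Finset.sum_eq_zero fun κ _ => if_neg fun h : (κ : ℕ) = k => hk (h ▸ κ.2)

/-- The restriction of the quadratic form `q` to the leg of `y = [i,j]`. -/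
def legForm (γ : V S → ℤ) (y : Σ i, Fin (S.m i)) : ℤ :=
  pathForm (S.e y.1 y.2 - 1) (legCoord γ y.1 y.2)

theorem legForm_nonneg (γ : V S → ℤ) (y : Σ i, Fin (S.m i)) : 0 ≤ legForm γ y :=
  pathForm_nonneg (legCoord_length γ y.1 y.2)

theorem legForm_le_sum (γ : V S → ℤ) (y : Σ i, Fin (S.m i)) : legForm γ y ≤ ∑ y', legForm γ y' :=
  Finset.single_le_sum (fun y' _ => legForm_nonneg γ y') (Finset.mem_univ y)

theorem legCoord_eq_zero_of_legForm_nonpos {γ : V S → ℤ} {i : Fin (S.p + 1)} {j : Fin (S.m i)}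
    (h : legForm γ ⟨i, j⟩ ≤ 0) (k : ℕ) : legCoord γ i j k = 0 := by
  rcases lt_or_ge k (S.e i j - 1) with hk | hk
  · exact eq_zero_of_pathForm_nonpos (legCoord_length γ i j) h hk.le
  · exact dif_neg hk.not_gt

theorem sum_arr_inr_vI (I : ∀ i, Fin (S.m i)) (i : Fin (S.p + 1)) (j : Fin (S.m i))
    (κ : Fin (S.e i j - 1)) :
    ∑ i' : {i // Iirr S i}, arr S (Sum.inr ⟨i, j, κ⟩) (vI S i' (I i')) =
      if j = I i ∧ (κ : ℕ) = 0 then 1 else 0 := by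
  simp only [arr, vI]
  by_cases hi : Iirr S i
  · rw [Finset.sum_eq_single ⟨i, hi⟩ (fun i' _ hne => ?_) (by simp)]
    · simp [hi, ← Fin.ext_iff]
    · have : i ≠ i'.1 := fun h => hne (Subtype.ext h.symm)
      simp [this, hi]
  · obtain ⟨hm, hi0⟩ := not_or.1 hi
    have hj : (j : ℕ) = 0 := by omega
    have hjI : I i = j := Fin.ext (by omega)
    rw [Finset.sum_eq_single (i0 S) (fun i' _ hne => ?_) (by simp)]
    · simp [hi, hi0, hj, hjI, i0]
    · have h : i ≠ i'.1 := fun h => hi (h ▸ i'.2)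
      have h0 : i'.1 ≠ 0 := fun h0 => hne (Subtype.ext h0)
      simp [h, h0]

/-- The vector `ε_{[i,j,1]} + ⋯ + ε_{[i,j,l]}`. -/
def legInterval (S : Setup) (i : Fin (S.p + 1)) (j : Fin (S.m i)) (l : ℕ) : V S → ℤ :=
  ∑ κ : Fin (S.e i j - 1), if (κ : ℕ) < l then eps S (Sum.inr ⟨i, j, κ⟩) else 0

theorem legInterval_inl (i : Fin (S.p + 1)) (j : Fin (S.m i)) (l : ℕ) (a : Vb S) :
    legInterval S i j l (Sum.inl a) = 0 := by
  rw [legInterval, Finset.sum_apply]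
  exact Finset.sum_eq_zero fun κ _ => by split_ifs <;> simp [eps]

theorem legInterval_inr (i : Fin (S.p + 1)) (j : Fin (S.m i)) (l : ℕ) (i' : Fin (S.p + 1))
    (j' : Fin (S.m i')) (κ' : Fin (S.e i' j' - 1)) :
    legInterval S i j l (Sum.inr ⟨i', j', κ'⟩) =
      if (⟨i', j'⟩ : Σ i, Fin (S.m i)) = ⟨i, j⟩ ∧ (κ' : ℕ) < l then 1 else 0 := by
  rw [legInterval, Finset.sum_apply]
  by_cases hy : (⟨i', j'⟩ : Σ i, Fin (S.m i)) = ⟨i, j⟩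
  · obtain ⟨rfl, hj⟩ := Sigma.mk.inj_iff.1 hy
    obtain rfl := eq_of_heq hj
    rw [Finset.sum_eq_single κ' (fun κ _ hne => ?_) (by simp)]
    · split_ifs <;> simp_all [eps]
    · split_ifs <;> simp [eps, hne.symm]
  · rw [if_neg fun h => hy h.1]
    refine Finset.sum_eq_zero fun κ _ => ?_
    have hne : (Sum.inr ⟨i', j', κ'⟩ : V S) ≠ Sum.inr ⟨i, j, κ⟩ := fun h =>
      hy (congrArg (fun x : Vr S => (⟨x.1, x.2.1⟩ : Σ i, Fin (S.m i))) (Sum.inr_injective h))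
    split_ifs <;> simp [eps, hne]

section Legs

variable {γ : V S → ℤ} (hγ : ∀ a : Vb S, γ (Sum.inl a) = 0)
include hγ

theorem bform_epsJ_of_inl_eq_zero (I : ∀ i, Fin (S.m i)) :
    bform S γ (epsJ S I) = -∑ i, legCoord γ i (I i) 0 := by
  have hvertex : ∀ i : {i // Iirr S i}, bform S γ (eps S (vI S i (I i))) =
      -∑ x : Vr S, arr S (Sum.inr x) (vI S i (I i)) * γ (Sum.inr x) := by
    intro i
    simp [bform_eps, vI, hγ, arr]
  have hsum : bform S γ (epsJ S I) = ∑ i : {i // Iirr S i}, bform S γ (eps S (vI S i (I i))) := by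
    simp only [epsJ_eq_sum_eps, bform_eq_eulerForm, map_sum, LinearMap.sum_apply,
      Finset.sum_add_distrib]
  simp only [hsum, hvertex, Finset.sum_neg_distrib]
  rw [Finset.sum_comm]
  simp only [← Finset.sum_mul, ← Nat.cast_sum, Fintype.sum_sigma, sum_arr_inr_vI]
  congr 1
  refine Finset.sum_congr rfl fun i _ => ?_
  rw [Finset.sum_eq_single (I i) (fun j _ hne => by simp [hne]) (by simp), ← sum_ite_val_eq]
  simp

theorem qform_of_inl_eq_zero :
    qform S γ = ∑ y, legForm γ y := by
  have hvertex : qform S γ = ∑ x : Vr S, γ (Sum.inr x) *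
      (γ (Sum.inr x) - ∑ x' : Vr S, arr S (Sum.inr x') (Sum.inr x) * γ (Sum.inr x')) := by
    rw [qform, eform, Finset.sum_comm (f := fun a b => (arr S a b : ℤ) * γ a * γ b)]
    simp only [Fintype.sum_sum_type, hγ, mul_zero, zero_mul, Finset.sum_const_zero, zero_add,
      mul_sub, Finset.sum_sub_distrib, Finset.mul_sum]
    congr 1
    exact Finset.sum_congr rfl fun _ _ => Finset.sum_congr rfl fun _ _ => by ring
  have harr : ∀ (i : Fin (S.p + 1)) (j : Fin (S.m i)) (κ : Fin (S.e i j - 1)),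
      ∑ x' : Vr S, (arr S (Sum.inr x') (Sum.inr ⟨i, j, κ⟩) : ℤ) * γ (Sum.inr x') =
        legCoord γ i j (κ + 1) := by
    intro i j κ
    rw [Fintype.sum_sigma, Finset.sum_eq_single i (fun i' _ hne => by simp [arr, hne]) (by simp),
      Fintype.sum_sigma, Finset.sum_eq_single j
        (fun j' _ hne => by simp [arr, Fin.val_ne_of_ne hne]) (by simp), ← sum_ite_val_eq]
    simp [arr]
  simp only [hvertex, Fintype.sum_sigma, harr, legForm, pathForm,
    ← Fin.sum_univ_eq_sum_range, legCoord_val]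

theorem qform_pos_of_inl_eq_zero (hne : γ ≠ 0) : 0 < qform S γ := by
  by_contra! hq
  rw [qform_of_inl_eq_zero hγ] at hq
  refine hne (funext fun a => ?_)
  rcases a with a | ⟨i, j, κ⟩
  · exact hγ a
  · exact (legCoord_val γ κ).symm.trans
      (legCoord_eq_zero_of_legForm_nonpos ((legForm_le_sum γ ⟨i, j⟩).trans hq) κ)

theorem eq_legInterval_of_qform_le_one {i : Fin (S.p + 1)} {j : Fin (S.m i)}
    (hpos : 0 < legCoord γ i j 0) (hq : qform S γ ≤ 1) :
    ∃ l, 1 ≤ l ∧ l ≤ S.e i j - 1 ∧ γ = legInterval S i j l := by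
  have hsum : ∑ y, legForm γ y ≤ 1 := qform_of_inl_eq_zero hγ ▸ hq
  have hlegpos : 0 < legForm γ ⟨i, j⟩ := by
    by_contra! h
    exact hpos.ne' (legCoord_eq_zero_of_legForm_nonpos h 0)
  have hother : ∀ y : Σ i, Fin (S.m i), y ≠ ⟨i, j⟩ → legForm γ y ≤ 0 := by
    intro y hy
    have hpair := Finset.sum_le_univ_sum_of_nonneg (legForm_nonneg γ) (s := {y, ⟨i, j⟩})
    rw [Finset.sum_pair hy] at hpair
    omega
  obtain ⟨l, hl, hle, hcoord⟩ := exists_eq_ite_of_pathForm_le_one (legCoord_length γ i j) hpos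
    ((legForm_le_sum γ ⟨i, j⟩).trans hsum)
  refine ⟨l, hl, hle, funext fun a => ?_⟩
  rcases a with a | ⟨i', j', κ⟩
  · rw [hγ, legInterval_inl]
  · rw [legInterval_inr, ← legCoord_val γ κ]
    by_cases hy : (⟨i', j'⟩ : Σ i, Fin (S.m i)) = ⟨i, j⟩
    · obtain ⟨rfl, hj⟩ := Sigma.mk.inj_iff.1 hy
      obtain rfl := eq_of_heq hj
      simpa using hcoord κ κ.2.le
    · rw [if_neg fun h => hy h.1]
      exact legCoord_eq_zero_of_legForm_nonpos (hother _ hy) κ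

end Legs

theorem bform_legInterval_epsJ (I : ∀ i, Fin (S.m i)) (i : Fin (S.p + 1)) {l : ℕ} (hl : 1 ≤ l)
    (hle : l ≤ S.e i (I i) - 1) : bform S (legInterval S i (I i) l) (epsJ S I) = -1 := by
  have hcoord : ∀ i', legCoord (legInterval S i (I i) l) i' (I i') 0 = if i' = i then 1 else 0 := by
    intro i'
    rw [legCoord]
    simp only [legInterval_inr]
    by_cases h : i' = i
    · subst h
      simp [Nat.lt_of_lt_of_le hl hle, Nat.lt_of_lt_of_le Nat.zero_lt_one hl]
    · simp [h]
  simp [bform_epsJ_of_inl_eq_zero (legInterval_inl i (I i) l), hcoord]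

section KilledBySJ

variable {I : ∀ i, Fin (S.m i)} {β : V S → ℤ}
  (hkill : ∀ (i : {i // Iirr S i}) (j : Fin (S.m i)), sJ S I β (vI S i j) = 0)
include hkill

theorem sum_vI_eq_bform_epsJ (i : {i // Iirr S i}) :
    ∑ j, β (vI S i j) = bform S β (epsJ S I) := by
  have hβ : ∀ j, β (vI S i j) = bform S β (epsJ S I) * epsJ S I (vI S i j) :=
    fun j => sub_eq_zero.1 (hkill i j)
  simp only [hβ, ← Finset.mul_sum]
  simp [vI, epsJ, ← Fin.ext_iff]

theorem exists_eq_epsJ_add_legInterval (hc : 0 < bform S β (epsJ S I)) (hq : qform S β ≤ 1) :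
    ∃ (i₀ : Fin (S.p + 1)) (l : ℕ), 1 ≤ l ∧ l ≤ S.e i₀ (I i₀) - 1 ∧
      β = epsJ S I + legInterval S i₀ (I i₀) l := by
  have hγ : ∀ a : Vb S, sJ S I β (Sum.inl a) = 0 := fun a => hkill a.1 a.2
  have hbform := bform_sJ_epsJ I β
  obtain ⟨i₀, -, hi₀⟩ : ∃ i ∈ Finset.univ, 0 < legCoord (sJ S I β) i (I i) 0 := by
    refine Finset.exists_lt_of_sum_lt (f := fun _ => (0 : ℤ)) ?_
    rw [bform_epsJ_of_inl_eq_zero hγ] at hbform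
    simpa using by linarith
  obtain ⟨l, hl, hle, hleg⟩ := eq_legInterval_of_qform_le_one hγ hi₀ (qform_sJ I β ▸ hq)
  rw [hleg, bform_legInterval_epsJ I i₀ hl hle, neg_inj] at hbform
  refine ⟨i₀, l, hl, hle, ?_⟩
  rw [← hleg, sJ_eq_sub_smul, ← hbform, one_smul, add_sub_cancel]

theorem qform_pos_of_bform_epsJ_ne_zero (hc : bform S β (epsJ S I) ≠ 0) : 0 < qform S β := by
  rw [← qform_sJ I β]
  refine qform_pos_of_inl_eq_zero (fun a => hkill a.1 a.2) fun h => hc ?_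
  rw [← neg_eq_zero, ← bform_sJ_epsJ, h, bform_eq_eulerForm]
  simp

end KilledBySJ

theorem refl1_inr_vI (x : Vr S) (β : V S → ℤ) (i : {i // Iirr S i}) (j : Fin (S.m i)) :
    refl1 S (Sum.inr x) β (vI S i j) = β (vI S i j) := by
  simp [refl1, eps, vI]

end Quiver

/-- Let `β ∈ R̃⁺` with `Σ_j β_[i,j] > 0` for every `i ∈ I_irr`, and suppose some
reflection `s_a` (for `a ∈ 𝒥 ∪ {[i,j,k]-vertices}`) kills all the block
coordinates of `β`. Then `a` is some `𝐢 ∈ 𝒥` and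
`β = ε_𝐢 + ε_{[i₀,j_{i₀},1]} + ⋯ + ε_{[i₀,j_{i₀},l]}` for some `i₀` and
`1 ≤ l ≤ e[i₀,j_{i₀}] - 1`; in particular `β` is a real root of `Q`. -/
theorem statement14 (S : Setup) (β : V S → ℤ)
    (hβ : isPosRoot S β ∧ inL S β)
    (hpos : ∀ i : {i : Fin (S.p+1) // Iirr S i}, 0 < ∑ j : Fin (S.m i.1), β (vI S i j))
    (hkill :
      (∃ I : ∀ i : Fin (S.p+1), Fin (S.m i),
        ∀ (i : {i : Fin (S.p+1) // Iirr S i}) (j : Fin (S.m i.1)),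
          sJ S I β (vI S i j) = 0) ∨
      (∃ (i : Fin (S.p+1)) (j : Fin (S.m i)) (κ : Fin (S.e i j - 1)),
        ∀ (i' : {i : Fin (S.p+1) // Iirr S i}) (j' : Fin (S.m i'.1)),
          refl1 S (Sum.inr ⟨i, j, κ⟩) β (vI S i' j') = 0)) :
    ∃ I : ∀ i : Fin (S.p+1), Fin (S.m i),
      (∀ (i : {i : Fin (S.p+1) // Iirr S i}) (j : Fin (S.m i.1)),
        sJ S I β (vI S i j) = 0) ∧
      ∃ (i₀ : Fin (S.p+1)) (l : ℕ), 1 ≤ l ∧ l ≤ S.e i₀ (I i₀) - 1 ∧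
        (β = epsJ S I + ∑ κ : Fin (S.e i₀ (I i₀) - 1),
              (if (κ : ℕ) < l then eps S (Sum.inr ⟨i₀, I i₀, κ⟩) else 0)) ∧
        isRealRoot S β := by
  obtain ⟨⟨hroot, -⟩, -⟩ := hβ
  rcases hkill with ⟨I, hI⟩ | ⟨i, j, κ, hβ₀⟩
  · have hc : 0 < bform S β (epsJ S I) := sum_vI_eq_bform_epsJ hI (i0 S) ▸ hpos (i0 S)
    obtain ⟨i₀, l, hl, hle, hβ⟩ := exists_eq_epsJ_add_legInterval hI hc hroot.qform_le_one
    exact ⟨I, hI, i₀, l, hl, hle, hβ,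
      hroot.isRealRoot_of_qform_pos (qform_pos_of_bform_epsJ_ne_zero hI hc.ne')⟩
  · simp only [refl1_inr_vI] at hβ₀
    simpa [hβ₀] using hpos (i0 S)

end

end DS
end

section
/- Fix (β,μ) ∈ S. Then there exist complex numbers γ_i for i ∈ I_irr ∖ {0} such that μ′ = μ + Σ_{i∈I_irr∖{0}} γ_i z^(i) has the following property: every β′ ∈ (ℤ_{≥0})^{Q_0} with β′ ≤ β coordinatewise and β′·μ′ = 0 lies in L. -/
open Polynomial Matrix BigOperators

namespace DS

noncomputable section

/-!
The pairing `β·z⁽ⁱ⁾` is the defect of the `i`-th equation defining `L`, so for a vector `β'` outside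
`L` the map `γ ↦ β'·μ'` is an affine form with a nonzero linear coefficient. There are only
countably many integer vectors `β'`. On the moment curve `γ_i = t ^ (i + 1)` each of these forms
becomes a nonzero polynomial in `t`, which has finitely many roots, while `ℂ` is uncountable.
-/

section CountableAvoidance

variable {κ ι R : Type*} [Countable κ] [CommRing R] [IsDomain R] [Uncountable R]

lemma exists_forall_not_isRoot {P : κ → R[X]} (hP : ∀ k, P k ≠ 0) :
    ∃ t : R, ∀ k, ¬ (P k).IsRoot t := by
  have hroots : (⋃ k, {t | (P k).IsRoot t}).Countable :=
    Set.countable_iUnion fun k => (finite_setOfPred_isRoot (hP k)).countable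
  by_contra! hcover
  exact Set.not_countable_univ (hroots.mono fun t _ => Set.mem_iUnion.mpr (hcover t))

lemma exists_forall_add_sum_mul_ne_zero (s : Finset ι) (a : κ → R) {c : κ → ι → R}
    (hc : ∀ k, ∃ i ∈ s, c k i ≠ 0) :
    ∃ γ : ι → R, ∀ k, a k + ∑ i ∈ s, γ i * c k i ≠ 0 := by
  obtain ⟨f, hf⟩ := Set.countable_iff_exists_injOn.mp s.countable_toSet
  let P (k : κ) : R[X] := C (a k) + ∑ i ∈ s, C (c k i) * X ^ (f i + 1)
  have coeff_P (k : κ) {i : ι} (hi : i ∈ s) : (P k).coeff (f i + 1) = c k i := by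
    have hterm (j : ι) (hj : j ∈ s) (hji : j ≠ i) :
        (C (c k j) * X ^ (f j + 1)).coeff (f i + 1) = 0 := by
      rw [coeff_C_mul_X_pow, if_neg fun h => hji (hf hj hi (Nat.succ_injective h.symm))]
    simp only [P, coeff_add, coeff_C_succ, zero_add, finsetSum_coeff]
    rw [Finset.sum_eq_single_of_mem i hi hterm, coeff_C_mul_X_pow, if_pos rfl]
  have hP (k : κ) : P k ≠ 0 := by
    obtain ⟨i, hi, hci⟩ := hc k
    intro hPk
    rw [← coeff_P k hi, hPk, coeff_zero] at hci
    exact hci rfl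
  obtain ⟨t, ht⟩ := exists_forall_not_isRoot hP
  have eval_P (k : κ) : (P k).eval t = a k + ∑ i ∈ s, t ^ (f i + 1) * c k i := by
    simp only [P, eval_add, eval_C, eval_finsetSum, eval_mul, eval_pow, eval_X, mul_comm (c k _)]
  exact ⟨fun i => t ^ (f i + 1), fun k => eval_P k ▸ ht k⟩

end CountableAvoidance

section Pairing

variable {S : Setup}

lemma dotC_add_sum_mul (β : V S → ℤ) (μ : V S → ℂ) {ι : Type*} (s : Finset ι) (γ : ι → ℂ)
    (z : ι → V S → ℂ) :
    dotC S β (fun a => μ a + ∑ i ∈ s, γ i * z i a) =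
      dotC S β μ + ∑ i ∈ s, γ i * dotC S β (z i) := by
  simp only [dotC, mul_add, Finset.sum_add_distrib, Finset.mul_sum, mul_left_comm]
  rw [Finset.sum_comm]

lemma zvec_inl {i : Fin (S.p + 1)} (hi : i ≠ 0) (v : Vb S) :
    zvec S i (Sum.inl v) = (if v.1.1 = i then 1 else 0) - (if v.1.1 = 0 then 1 else 0) := by
  by_cases h : v.1.1 = 0
  · simp [zvec, h, hi.symm]
  · simp [zvec, h]

lemma dotC_zvec (β : V S → ℤ) (i : {i : Fin (S.p + 1) // Iirr S i}) (hi : i.1 ≠ 0) :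
    dotC S β (zvec S i.1) = ∑ j, (β (vI S i j) : ℂ) - ∑ j, (β (v0 S j) : ℂ) := by
  have hzero (x : {i : Fin (S.p + 1) // Iirr S i}) : x.1 = 0 ↔ x = i0 S :=
    (Subtype.ext_iff (a2 := i0 S)).symm
  have hinr (v : Vr S) : zvec S i.1 (Sum.inr v) = 0 := rfl
  calc
    dotC S β (zvec S i.1) = ∑ x, (∑ j, (β (vI S x j) : ℂ)) *
        ((if x = i then 1 else 0) - (if x = i0 S then 1 else 0)) := by
      simp only [dotC, Fintype.sum_sum_type, Fintype.sum_sigma, zvec_inl hi, hinr, mul_zero,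
        Finset.sum_const_zero, add_zero, Subtype.coe_inj, hzero, Finset.sum_mul, vI]
    _ = ∑ j, (β (vI S i j) : ℂ) - ∑ j, (β (v0 S j) : ℂ) := by
      simp only [mul_sub, mul_ite, mul_one, mul_zero, Finset.sum_sub_distrib, Finset.sum_ite_eq',
        Finset.mem_univ, if_true]
      rfl

lemma inL_iff_dotC_zvec_eq_zero (β : V S → ℤ) :
    inL S β ↔ ∀ i, Iirr S i → i ≠ 0 → dotC S β (zvec S i) = 0 := by
  simp only [inL, Subtype.forall]
  refine forall₃_congr fun i hirr hi => ?_
  rw [dotC_zvec β ⟨i, hirr⟩ hi, sub_eq_zero, eq_comm]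
  exact_mod_cast Iff.rfl

end Pairing

theorem statement15_general (S : Setup) (μ : V S → ℂ) :
    ∃ γ : Fin (S.p + 1) → ℂ,
      ∀ β' : V S → ℤ,
        dotC S β'
          (fun a => μ a +
            ∑ i ∈ Finset.univ.filter (fun i : Fin (S.p + 1) => Iirr S i ∧ i ≠ 0),
              γ i * zvec S i a) = 0 →
        inL S β' := by
  have hdefect (b : {b : V S → ℤ // ¬ inL S b}) :
      ∃ i ∈ Finset.univ.filter (fun i : Fin (S.p + 1) => Iirr S i ∧ i ≠ 0),
        dotC S b.1 (zvec S i) ≠ 0 := by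
    simpa [inL_iff_dotC_zvec_eq_zero, and_assoc] using b.2
  have : Uncountable ℂ := Set.not_countable_univ_iff.mp not_countable_complex
  obtain ⟨γ, hγ⟩ := exists_forall_add_sum_mul_ne_zero _ (fun b => dotC S b.1 μ) hdefect
  refine ⟨γ, fun β' hβ' => ?_⟩
  by_contra hL
  rw [dotC_add_sum_mul] at hβ'
  exact hγ ⟨β', hL⟩ hβ'

/-- Fix `(β,μ) ∈ 𝒮`. Then there exist `γ_i ∈ ℂ` (for `i ∈ I_irr ∖ {0}`) such that
`μ' = μ + Σ_i γ_i z⁽ⁱ⁾` satisfies: every `β' ≥ 0` with `β' ≤ β` coordinatewise and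
`β'·μ' = 0` lies in `L`. -/
theorem statement15 (S : Setup) (β : V S → ℤ) (μ : V S → ℂ)
    (hβ : inL S β) (hβμ : dotC S β μ = 0) :
    ∃ γ : Fin (S.p+1) → ℂ,
      ∀ β' : V S → ℤ, (∀ a, 0 ≤ β' a) → (∀ a, β' a ≤ β a) →
        dotC S β'
          (fun a => μ a +
            ∑ i ∈ Finset.univ.filter (fun i : Fin (S.p+1) => Iirr S i ∧ i ≠ 0),
              γ i * zvec S i a) = 0 →
        inL S β' :=
  (statement15_general S μ).imp fun _ hγ β' _ _ => hγ β'

end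

end DS
end

section
/- The truncated orbit O_B equals the set of A_2x^{−2} + A_1x^{−1} ∈ 𝔤_2* for which there exists G ∈ GL(n,ℂ) with G^{−1}A_2G = B_irr and (G^{−1}A_1G)_{i,i} ∈ C_{R_i} for every i = 1,…,m. Moreover, if G_1, G_2 ∈ GL(n,ℂ) both satisfy G_t^{−1}A_2G_t = B_irr (t = 1,2), then G_2^{−1}G_1 = diag(h_1,…,h_m) with h_i ∈ GL(n_i,ℂ) for i = 1,…,m. -/
open Polynomial Matrix

namespace DS2

noncomputable section

/-- Data for a degree-2 HTL normal form
`B = diag(α₁ I_{n₁} x⁻² + R₁ x⁻¹, …, α_m I_{n_m} x⁻² + R_m x⁻¹)` on `ℂⁿ`,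
`n = n₁ + ⋯ + n_m`, with pairwise distinct `α_j`. -/
structure Setup2 where
  m : ℕ
  hm : 0 < m
  ns : Fin m → ℕ
  n : ℕ
  emb : (Σ j : Fin m, Fin (ns j)) ≃ Fin n
  al : Fin m → ℂ
  hal : Function.Injective al
  R : ∀ j : Fin m, Matrix (Fin (ns j)) (Fin (ns j)) ℂ

/-- An element `A₂ x⁻² + A₁ x⁻¹` of `𝔤₂*` is encoded as the polynomial matrix
`A₂ + A₁ x` (degree < 2); the coadjoint `G₂`-action becomes conjugation mod `x²`. -/
abbrev PM (T : Setup2) := Matrix (Fin T.n) (Fin T.n) (Polynomial ℂ)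

/-- The polynomial encoding of `A₂ x⁻² + A₁ x⁻¹`. -/
def polyOf (T : Setup2) (A1 A2 : Matrix (Fin T.n) (Fin T.n) ℂ) : PM T :=
  Matrix.of fun a b => Polynomial.C (A2 a b) + Polynomial.C (A1 a b) * Polynomial.X

/-- The HTL normal form `B`, in the polynomial encoding. -/
def Bmat2 (T : Setup2) : PM T :=
  Matrix.of fun a b =>
    if h : (T.emb.symm a).1 = (T.emb.symm b).1 then
      (if Fin.cast (by rw [h]) (T.emb.symm a).2 = (T.emb.symm b).2 then
          Polynomial.C (T.al (T.emb.symm b).1)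
        else 0)
        + Polynomial.C
            (T.R (T.emb.symm b).1 (Fin.cast (by rw [h]) (T.emb.symm a).2)
              (T.emb.symm b).2)
          * Polynomial.X
    else 0

/-- All entries have degree `< 2`, i.e. the matrix encodes an element of `𝔤₂*`. -/
def degLT2 (T : Setup2) (A : PM T) : Prop := ∀ a b, (A a b).degree < (2 : ℕ)

/-- Membership in the truncated orbit `𝒪_B`: conjugation modulo `x²` by an element
of `G₂ = GL(n, ℂ[[x]]/x²)` (encoded by a polynomial matrix with invertible
constant term). -/
def inOrbit2 (T : Setup2) (A : PM T) : Prop :=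
  degLT2 T A ∧
  ∃ g : PM T, IsUnit (g.map fun r => r.coeff 0) ∧
    ∀ a b, (Polynomial.X ^ 2 : Polynomial ℂ) ∣ (g * Bmat2 T - A * g) a b

/-- `B_irr = diag(α₁ I_{n₁}, …, α_m I_{n_m})`. -/
def Birr (T : Setup2) : Matrix (Fin T.n) (Fin T.n) ℂ :=
  Matrix.of fun a b => if a = b then T.al (T.emb.symm a).1 else 0

/-- The `(j,j)`-block of a matrix with respect to `ℂⁿ = V₁ ⊕ ⋯ ⊕ V_m`. -/
def blockAt (T : Setup2) (j : Fin T.m) (M : Matrix (Fin T.n) (Fin T.n) ℂ) :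
    Matrix (Fin (T.ns j)) (Fin (T.ns j)) ℂ :=
  Matrix.of fun s t => M (T.emb ⟨j, s⟩) (T.emb ⟨j, t⟩)

/-!
Writing `g = G (1 + Z x)`, the equation `A = g B g⁻¹` modulo `x²` says that `G⁻¹ A₂ G = B_irr` and
that `G⁻¹ A₁ G` equals `diag(R₁, …, R_m)` up to a commutator `[Z, B_irr]`. Since the `α_j` are
distinct, these commutators are exactly the matrices with zero diagonal blocks, so the second
condition prescribes the diagonal blocks of `G⁻¹ A₁ G` and nothing else. Multiplying `G` by a block
diagonal matrix, which commutes with `B_irr`, conjugates these blocks independently. Two choices of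
`G` differ by an element of the centralizer of `B_irr`, the block diagonal matrices.
-/

section FirstOrderConjugation

lemma conj_eq_iff_semiconjBy {M : Type*} [Monoid M] {u : Mˣ} {a b : M} :
    (u⁻¹).val * a * u.val = b ↔ SemiconjBy u.val b a := by
  rw [SemiconjBy, mul_assoc, Units.inv_mul_eq_iff_eq_mul, eq_comm]

lemma semiconjBy_and_add_eq_add_iff {S : Type*} [Ring S] (u : Sˣ) (z a₁ a₂ b₁ b₂ : S) :
    SemiconjBy u.val b₂ a₂ ∧
        u.val * b₁ + u.val * z * b₂ = a₂ * (u.val * z) + a₁ * u.val ↔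
      (u⁻¹).val * a₂ * u.val = b₂ ∧ (u⁻¹).val * a₁ * u.val = b₁ + ⁅z, b₂⁆ := by
  rw [conj_eq_iff_semiconjBy]
  refine and_congr_right fun hu => ?_
  have a₂_mul : a₂ * (u.val * z) = u.val * (b₂ * z) := by
    rw [← mul_assoc, ← hu.eq, mul_assoc]
  rw [a₂_mul, mul_assoc _ z, mul_assoc _ a₁, Units.inv_mul_eq_iff_eq_mul, Ring.lie_def, mul_add,
    mul_sub, ← add_sub_assoc, eq_sub_iff_add_eq', eq_comm]

variable {R l ι n : Type*}

lemma X_sq_dvd_iff [Semiring R] {p : R[X]} : X ^ 2 ∣ p ↔ p.coeff 0 = 0 ∧ p.coeff 1 = 0 := by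
  simp only [Polynomial.X_pow_dvd_iff, Nat.forall_lt_succ_right, Nat.not_lt_zero,
    IsEmpty.forall_iff, implies_true, true_and]

section Semiring

variable [Semiring R] [Fintype ι] (P : Matrix l ι R[X]) (Q : Matrix ι n R[X])

lemma map_coeff_zero_mul :
    (P * Q).map (coeff · 0) = P.map (coeff · 0) * Q.map (coeff · 0) := by
  ext i j
  simp [Matrix.mul_apply, mul_coeff_zero]

lemma map_coeff_one_mul :
    (P * Q).map (coeff · 1) =
      P.map (coeff · 0) * Q.map (coeff · 1) + P.map (coeff · 1) * Q.map (coeff · 0) := by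
  ext i j
  simp [Matrix.mul_apply, mul_coeff_one, Finset.sum_add_distrib]

end Semiring

lemma X_sq_dvd_sub_apply_iff [Ring R] (P Q : Matrix l n R[X]) :
    (∀ i j, X ^ 2 ∣ (P - Q) i j) ↔
      P.map (coeff · 0) = Q.map (coeff · 0) ∧ P.map (coeff · 1) = Q.map (coeff · 1) := by
  simp [X_sq_dvd_iff, forall_and, ← Matrix.ext_iff, sub_eq_zero]

/-- The matrix polynomial `A₂ + A₁ X`, which encodes `A₂ x⁻² + A₁ x⁻¹`; as in `polyOf`, the
coefficient of `X` comes first. -/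
def linearPolynomial [Semiring R] (A₁ A₂ : Matrix ι ι R) : Matrix ι ι R[X] :=
  Matrix.of fun i j => C (A₂ i j) + C (A₁ i j) * X

lemma linearPolynomial_map_coeff_zero [Semiring R] (A₁ A₂ : Matrix ι ι R) :
    (linearPolynomial A₁ A₂).map (coeff · 0) = A₂ := by
  ext i j
  simp [linearPolynomial]

lemma linearPolynomial_map_coeff_one [Semiring R] (A₁ A₂ : Matrix ι ι R) :
    (linearPolynomial A₁ A₂).map (coeff · 1) = A₁ := by
  ext i j
  simp [linearPolynomial, coeff_C]

variable [Ring R] [Fintype ι] [DecidableEq ι]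

/-- Conjugacy `A = g B g⁻¹` modulo `X²`, for a matrix polynomial `g` that is invertible
modulo `X²`; this is encoded as invertibility of its constant term. -/
def ConjModXSq (A B : Matrix ι ι R[X]) : Prop :=
  ∃ g : Matrix ι ι R[X], IsUnit (g.map (coeff · 0)) ∧
    ∀ i j, X ^ 2 ∣ (g * B - A * g) i j

theorem conjModXSq_linearPolynomial_iff (A₁ A₂ B₁ B₂ : Matrix ι ι R) :
    ConjModXSq (linearPolynomial A₁ A₂) (linearPolynomial B₁ B₂) ↔
      ∃ (G : (Matrix ι ι R)ˣ) (Z : Matrix ι ι R),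
        (G⁻¹).val * A₂ * G.val = B₂ ∧ (G⁻¹).val * A₁ * G.val = B₁ + ⁅Z, B₂⁆ := by
  simp only [ConjModXSq, X_sq_dvd_sub_apply_iff, map_coeff_zero_mul, map_coeff_one_mul,
    linearPolynomial_map_coeff_zero, linearPolynomial_map_coeff_one]
  constructor
  · rintro ⟨g, ⟨G, hG⟩, hg⟩
    refine ⟨G, (G⁻¹).val * g.map (coeff · 1), ?_⟩
    rwa [← semiconjBy_and_add_eq_add_iff, Units.mul_inv_cancel_left, hG]
  · rintro ⟨G, Z, hGZ⟩
    refine ⟨linearPolynomial (G.val * Z) G.val, ?_⟩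
    rw [linearPolynomial_map_coeff_zero, linearPolynomial_map_coeff_one]
    exact ⟨G.isUnit, (semiconjBy_and_add_eq_add_iff G Z A₁ A₂ B₁ B₂).mpr hGZ⟩

end FirstOrderConjugation

section AdDiagonal

variable {K ι : Type*} [Fintype ι] [DecidableEq ι] {d : ι → K}

lemma commute_diagonal_left_iff [CommRing K] [NoZeroDivisors K] {P : Matrix ι ι K} :
    Commute (diagonal d) P ↔ ∀ i j, d i ≠ d j → P i j = 0 := by
  simp only [commute_iff_eq, ← Matrix.ext_iff, diagonal_mul, mul_diagonal]
  refine forall₂_congr fun i j => ?_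
  rw [mul_comm, mul_eq_mul_left_iff, or_iff_not_imp_left]

lemma exists_eq_lie_diagonal_iff [Field K] {M : Matrix ι ι K} :
    (∃ Z : Matrix ι ι K, M = ⁅Z, diagonal d⁆) ↔ ∀ i j, d i = d j → M i j = 0 := by
  simp only [← Matrix.ext_iff, Ring.lie_def, Matrix.sub_apply, diagonal_mul, mul_diagonal]
  constructor
  · rintro ⟨Z, hZ⟩ i j hij
    rw [hZ, hij]
    ring
  · intro hM
    refine ⟨Matrix.of fun i j => M i j / (d j - d i), fun i j => ?_⟩
    rw [Matrix.of_apply]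
    by_cases hij : d i = d j
    · simp [hM i j hij]
    · have : d j - d i ≠ 0 := sub_ne_zero.mpr (Ne.symm hij)
      field_simp

end AdDiagonal

section BlockDiagonal

variable {R J : Type*} [Semiring R] [Fintype J] [DecidableEq J] {κ : J → Type*}
  [∀ j, Fintype (κ j)]

lemma blockDiag'_blockDiagonal'_mul {l n : J → Type*} (h : ∀ j, Matrix (l j) (κ j) R)
    (M : Matrix (Σ j, κ j) (Σ j, n j) R) (j : J) :
    blockDiag' (blockDiagonal' h * M) j = h j * blockDiag' M j := by
  ext s t
  simp only [blockDiag'_apply, Matrix.mul_apply, Fintype.sum_sigma]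
  rw [Fintype.sum_eq_single j fun k hk => Finset.sum_eq_zero fun u _ => by
    rw [blockDiagonal'_apply_ne h s u hk.symm, zero_mul]]
  simp only [blockDiagonal'_apply_eq]

lemma blockDiag'_mul_blockDiagonal' {l n : J → Type*} (M : Matrix (Σ j, l j) (Σ j, κ j) R)
    (h : ∀ j, Matrix (κ j) (n j) R) (j : J) :
    blockDiag' (M * blockDiagonal' h) j = blockDiag' M j * h j := by
  ext s t
  simp only [blockDiag'_apply, Matrix.mul_apply, Fintype.sum_sigma]
  rw [Fintype.sum_eq_single j fun k hk => Finset.sum_eq_zero fun u _ => by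
    rw [blockDiagonal'_apply_ne h u t hk, mul_zero]]
  simp only [blockDiagonal'_apply_eq]

end BlockDiagonal

section Blocks

variable {K J ι : Type*} {κ : J → Type*} (e : (Σ j, κ j) ≃ ι)

/-- The diagonal blocks `M_{j,j}` of a matrix whose index type is split by `e` into the
blocks `κ j`. -/
def diagBlocks (M : Matrix ι ι K) : ∀ j, Matrix (κ j) (κ j) K :=
  blockDiag' (M.submatrix e e)

lemma diagBlocks_eq_zero_iff [Zero K] {M : Matrix ι ι K} :
    diagBlocks e M = 0 ↔ ∀ a b, (e.symm a).1 = (e.symm b).1 → M a b = 0 := by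
  constructor
  · intro hM a b hab
    obtain ⟨⟨i, s⟩, rfl⟩ := e.surjective a
    obtain ⟨⟨j, t⟩, rfl⟩ := e.surjective b
    obtain rfl : i = j := by simpa using hab
    exact congrFun₂ (congrFun hM i) s t
  · intro hM
    ext j s t
    exact hM _ _ (by simp)

lemma diagBlocks_sub [AddGroup K] (M N : Matrix ι ι K) :
    diagBlocks e (M - N) = diagBlocks e M - diagBlocks e N :=
  rfl

lemma diagBlocks_one [∀ j, DecidableEq (κ j)] [DecidableEq ι] [Zero K] [One K] :
    diagBlocks e (1 : Matrix ι ι K) = 1 := by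
  classical
  rw [diagBlocks, submatrix_one_equiv, blockDiag'_one]

/-- The matrix `diag(α₁ I, …, α_m I)`, which is `B_irr`, for the splitting `e` of the index
type. -/
def blockScalar [DecidableEq ι] [Zero K] (α : J → K) : Matrix ι ι K :=
  diagonal fun a => α (e.symm a).1

section Centralizer

variable [Fintype ι] [DecidableEq ι] {α : J → K}

lemma exists_eq_add_lie_blockScalar_iff [Field K] (hα : Function.Injective α)
    {M N : Matrix ι ι K} :
    (∃ Z : Matrix ι ι K, M = N + ⁅Z, blockScalar e α⁆) ↔ diagBlocks e M = diagBlocks e N := by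
  simp only [← sub_eq_iff_eq_add', blockScalar]
  rw [exists_eq_lie_diagonal_iff, ← sub_eq_zero, ← diagBlocks_sub, diagBlocks_eq_zero_iff]
  simp only [hα.eq_iff]

lemma apply_eq_zero_of_conj_eq_blockScalar [CommRing K] [NoZeroDivisors K]
    (hα : Function.Injective α) {A : Matrix ι ι K} {G₁ G₂ : (Matrix ι ι K)ˣ}
    (h₁ : (G₁⁻¹).val * A * G₁.val = blockScalar e α)
    (h₂ : (G₂⁻¹).val * A * G₂.val = blockScalar e α) {a b : ι}
    (hab : (e.symm a).1 ≠ (e.symm b).1) : ((G₂⁻¹).val * G₁.val) a b = 0 := by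
  rw [conj_eq_iff_semiconjBy] at h₁ h₂
  have hcomm : Commute (blockScalar e α) ((G₂⁻¹).val * G₁.val) :=
    Commute.symm (h₂.units_inv_symm_left.mul_left h₁)
  exact commute_diagonal_left_iff.mp hcomm a b (hα.ne hab)

end Centralizer

variable [Fintype J] [DecidableEq J] [∀ j, Fintype (κ j)] [∀ j, DecidableEq (κ j)] [Fintype ι]
  [DecidableEq ι]

section Semiring

variable [Semiring K]

/-- The inclusion `(h_j)_j ↦ diag(h_j)_j` of the block diagonal matrices, for the splitting `e`
of the index type, as a ring homomorphism. -/
def blockDiagonalHom : (∀ j, Matrix (κ j) (κ j) K) →+* Matrix ι ι K :=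
  (reindexRingEquiv K e).toRingHom.comp (blockDiagonal'RingHom κ K)

variable (h : ∀ j, Matrix (κ j) (κ j) K) (M : Matrix ι ι K)

lemma blockDiagonalHom_apply (a b : ι) :
    blockDiagonalHom e h a b = blockDiagonal' h (e.symm a) (e.symm b) :=
  rfl

lemma blockDiagonalHom_submatrix : (blockDiagonalHom e h).submatrix e e = blockDiagonal' h := by
  ext
  simp [blockDiagonalHom_apply]

lemma diagBlocks_blockDiagonalHom_mul :
    diagBlocks e (blockDiagonalHom e h * M) = h * diagBlocks e M := by
  ext1 j
  rw [diagBlocks, ← submatrix_mul_equiv _ _ e e e, blockDiagonalHom_submatrix,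
    blockDiag'_blockDiagonal'_mul]
  rfl

lemma diagBlocks_mul_blockDiagonalHom :
    diagBlocks e (M * blockDiagonalHom e h) = diagBlocks e M * h := by
  ext1 j
  rw [diagBlocks, ← submatrix_mul_equiv _ _ e e e, blockDiagonalHom_submatrix,
    blockDiag'_mul_blockDiagonal']
  rfl

lemma diagBlocks_blockDiagonalHom : diagBlocks e (blockDiagonalHom e h) = h := by
  rw [diagBlocks, blockDiagonalHom_submatrix, blockDiag'_blockDiagonal']

lemma blockDiagonalHom_diagBlocks {M : Matrix ι ι K}
    (hM : ∀ a b, (e.symm a).1 ≠ (e.symm b).1 → M a b = 0) :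
    blockDiagonalHom e (diagBlocks e M) = M := by
  ext a b
  obtain ⟨⟨i, s⟩, rfl⟩ := e.surjective a
  obtain ⟨⟨j, t⟩, rfl⟩ := e.surjective b
  rw [blockDiagonalHom_apply, e.symm_apply_apply, e.symm_apply_apply]
  obtain rfl | hij := eq_or_ne i j
  · rw [blockDiagonal'_apply_eq]
    rfl
  · rw [blockDiagonal'_apply_ne _ _ _ hij, hM _ _ (by simpa using hij)]

omit [Fintype J] [DecidableEq J] in
lemma isUnit_diagBlocks [Finite J] (P : (Matrix ι ι K)ˣ)
    (hP : ∀ a b, (e.symm a).1 ≠ (e.symm b).1 → P.val a b = 0) :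
    IsUnit (diagBlocks e P.val) := by
  classical
  cases nonempty_fintype J
  refine ⟨⟨diagBlocks e P.val, diagBlocks e (P⁻¹).val, ?_, ?_⟩, rfl⟩
  · rw [← diagBlocks_blockDiagonalHom_mul, blockDiagonalHom_diagBlocks e hP, Units.mul_inv,
      diagBlocks_one]
  · rw [← diagBlocks_mul_blockDiagonalHom, blockDiagonalHom_diagBlocks e hP, Units.inv_mul,
      diagBlocks_one]

end Semiring

lemma commute_blockDiagonalHom_blockScalar [CommSemiring K] (h : ∀ j, Matrix (κ j) (κ j) K)
    (α : J → K) : Commute (blockDiagonalHom e h) (blockScalar e α) := by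
  ext a b
  rw [blockScalar, mul_diagonal, diagonal_mul]
  by_cases hab : (e.symm a).1 = (e.symm b).1
  · rw [hab, mul_comm]
  · rw [blockDiagonalHom_apply, blockDiagonal'_apply_ne _ _ _ hab, zero_mul, mul_zero]

omit [Fintype J] [DecidableEq J] in
lemma exists_conj_diagBlocks_eq_iff [Finite J] [CommSemiring K] (α : J → K)
    (R : ∀ j, Matrix (κ j) (κ j) K) (A₁ A₂ : Matrix ι ι K) :
    (∃ G : (Matrix ι ι K)ˣ, (G⁻¹).val * A₂ * G.val = blockScalar e α ∧
        diagBlocks e ((G⁻¹).val * A₁ * G.val) = R) ↔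
      ∃ G : (Matrix ι ι K)ˣ, (G⁻¹).val * A₂ * G.val = blockScalar e α ∧
        ∀ j, ∃ h : (Matrix (κ j) (κ j) K)ˣ,
          diagBlocks e ((G⁻¹).val * A₁ * G.val) j = h.val * R j * (h⁻¹).val := by
  classical
  cases nonempty_fintype J
  constructor
  · rintro ⟨G, hA₂, hA₁⟩
    exact ⟨G, hA₂, fun j => ⟨1, by rw [hA₁, inv_one, Units.val_one, one_mul, mul_one]⟩⟩
  · rintro ⟨G, hA₂, hA₁⟩
    choose h hA₁ using hA₁
    let u : (∀ j, Matrix (κ j) (κ j) K)ˣ := MulEquiv.piUnits.symm h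
    let H : (Matrix ι ι K)ˣ := Units.map (blockDiagonalHom e).toMonoidHom u
    refine ⟨G * H, ?_, ?_⟩
    · rw [conj_eq_iff_semiconjBy] at hA₂ ⊢
      exact hA₂.mul_left (commute_blockDiagonalHom_blockScalar e u.val α)
    · calc diagBlocks e (((G * H)⁻¹).val * A₁ * (G * H).val)
          = diagBlocks e (blockDiagonalHom e (u⁻¹).val * ((G⁻¹).val * A₁ * G.val) *
              blockDiagonalHom e u.val) := by
            simp only [_root_.mul_inv_rev, Units.val_mul, mul_assoc]
            rfl
        _ = (u⁻¹).val * diagBlocks e ((G⁻¹).val * A₁ * G.val) * u.val := by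
            rw [diagBlocks_mul_blockDiagonalHom, diagBlocks_blockDiagonalHom_mul]
        _ = (u⁻¹).val * (u.val * R * (u⁻¹).val) * u.val := by
            rw [funext hA₁]
            rfl
        _ = R := by
            simp only [mul_assoc, Units.inv_mul_cancel_left, Units.inv_mul, mul_one]

theorem statement16_general [Field K] {α : J → K} (hα : Function.Injective α)
    (R : ∀ j, Matrix (κ j) (κ j) K) :
    (∀ A₁ A₂ : Matrix ι ι K,
      ConjModXSq (linearPolynomial A₁ A₂)
          (linearPolynomial (blockDiagonalHom e R) (blockScalar e α)) ↔
        ∃ G : (Matrix ι ι K)ˣ, (G⁻¹).val * A₂ * G.val = blockScalar e α ∧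
          ∀ j, ∃ h : (Matrix (κ j) (κ j) K)ˣ,
            diagBlocks e ((G⁻¹).val * A₁ * G.val) j = h.val * R j * (h⁻¹).val) ∧
    (∀ (A₂ : Matrix ι ι K) (G₁ G₂ : (Matrix ι ι K)ˣ),
      (G₁⁻¹).val * A₂ * G₁.val = blockScalar e α →
      (G₂⁻¹).val * A₂ * G₂.val = blockScalar e α →
      (∀ a b, (e.symm a).1 ≠ (e.symm b).1 → ((G₂⁻¹).val * G₁.val) a b = 0) ∧
      ∀ j, IsUnit (diagBlocks e ((G₂⁻¹).val * G₁.val) j)) := by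
  refine ⟨fun A₁ A₂ => ?_, fun A₂ G₁ G₂ h₁ h₂ => ?_⟩
  · rw [← exists_conj_diagBlocks_eq_iff, conjModXSq_linearPolynomial_iff]
    simp only [exists_and_left, exists_eq_add_lie_blockScalar_iff e hα,
      diagBlocks_blockDiagonalHom]
  · have hoff : ∀ a b, (e.symm a).1 ≠ (e.symm b).1 → ((G₂⁻¹).val * G₁.val) a b = 0 :=
      fun _ _ => apply_eq_zero_of_conj_eq_blockScalar e hα h₁ h₂
    exact ⟨hoff, Pi.isUnit_iff.mp (isUnit_diagBlocks e (G₂⁻¹ * G₁) hoff)⟩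

end Blocks

section Setup2

variable (T : Setup2)

lemma Birr_eq_blockScalar : Birr T = blockScalar T.emb T.al := by
  ext a b
  rw [Birr, Matrix.of_apply, blockScalar, diagonal_apply]

lemma Bmat2_eq_linearPolynomial :
    Bmat2 T = linearPolynomial (blockDiagonalHom T.emb T.R) (blockScalar T.emb T.al) := by
  ext1 a b
  obtain ⟨⟨i, s⟩, rfl⟩ := T.emb.surjective a
  obtain ⟨⟨j, t⟩, rfl⟩ := T.emb.surjective b
  simp only [Bmat2, linearPolynomial, Matrix.of_apply, blockDiagonalHom_apply, blockScalar,
    diagonal_apply, T.emb.injective.eq_iff]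
  rw! [T.emb.symm_apply_apply, T.emb.symm_apply_apply]
  obtain rfl | hij := eq_or_ne i j
  · simp [blockDiagonal'_apply_eq, apply_ite C]
  · simp [blockDiagonal'_apply_ne _ _ _ hij, hij]

lemma degLT2_polyOf (A1 A2 : Matrix (Fin T.n) (Fin T.n) ℂ) : degLT2 T (polyOf T A1 A2) := by
  intro a b
  rw [polyOf, Matrix.of_apply, add_comm]
  exact degree_linear_le.trans_lt (by norm_num)

lemma inOrbit2_polyOf_iff (A1 A2 : Matrix (Fin T.n) (Fin T.n) ℂ) :
    inOrbit2 T (polyOf T A1 A2) ↔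
      ConjModXSq (linearPolynomial A1 A2)
        (linearPolynomial (blockDiagonalHom T.emb T.R) (blockScalar T.emb T.al)) := by
  rw [← Bmat2_eq_linearPolynomial]
  exact and_iff_right (degLT2_polyOf T A1 A2)

end Setup2

/-- **Structure of truncated orbits of degree 2.**
`𝒪_B` consists of the `A₂x⁻² + A₁x⁻¹ ∈ 𝔤₂*` for which some `G ∈ GL(n,ℂ)` satisfies
`G⁻¹A₂G = B_irr` and `(G⁻¹A₁G)_{i,i} ∈ C_{R_i}` for all `i`.  Moreover, if
`G₁, G₂ ∈ GL(n,ℂ)` both satisfy `G_t⁻¹ A₂ G_t = B_irr`, then `G₂⁻¹G₁` is block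
diagonal with invertible blocks. -/
theorem statement16 (T : Setup2) :
    (∀ A1 A2 : Matrix (Fin T.n) (Fin T.n) ℂ,
      inOrbit2 T (polyOf T A1 A2) ↔
        ∃ G : (Matrix (Fin T.n) (Fin T.n) ℂ)ˣ,
          (G⁻¹).val * A2 * G.val = Birr T ∧
          ∀ j : Fin T.m, ∃ h : (Matrix (Fin (T.ns j)) (Fin (T.ns j)) ℂ)ˣ,
            blockAt T j ((G⁻¹).val * A1 * G.val) = h.val * T.R j * (h⁻¹).val) ∧
    (∀ (A2 : Matrix (Fin T.n) (Fin T.n) ℂ)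
        (G1 G2 : (Matrix (Fin T.n) (Fin T.n) ℂ)ˣ),
      (G1⁻¹).val * A2 * G1.val = Birr T →
      (G2⁻¹).val * A2 * G2.val = Birr T →
      (∀ a b, (T.emb.symm a).1 ≠ (T.emb.symm b).1 → ((G2⁻¹).val * G1.val) a b = 0) ∧
      ∀ j : Fin T.m, IsUnit (blockAt T j ((G2⁻¹).val * G1.val))) := by
  simp only [inOrbit2_polyOf_iff, Birr_eq_blockScalar]
  exact statement16_general T.emb T.hal T.R

end

end DS2
end

section
/- The map (g,A) ↦ gAg^{−1} induces a well-defined bijection from GL(n,ℂ) ×_H Ad_H(O^o_B) onto O_B. -/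
/-!
The constant term of `g ∈ G_k` splits off: `g = u g₀` with `u ∈ GL(n,ℂ)` and `g₀ ∈ G⁰_k`.  Hence
`𝒪_B` is the union of the constant conjugates of `𝒪⁰_B`, which gives surjectivity.  For injectivity,
two elements of `G_k` that conjugate `B` to the same matrix differ by an element of the stabiliser
of `B`, so it suffices that such an element `P` has constant term in `H`.  Modulo `x^{k-1}` the
matrix `B` is diagonal with entries `x^k q_j(x⁻¹)`, and for `i ≠ j` the difference of two of these
is not divisible by `x^{k-1}` because `q_i - q_j ∈ s²ℂ[s]` is nonzero of degree `≤ k`; therefore the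
off-diagonal blocks of `P` vanish at `x = 0`.
-/

open Polynomial Matrix

namespace DS3

noncomputable section

/-- Data of an HTL normal form
`B = diag(q₁(x⁻¹) I_{n₁} + R₁ x⁻¹, …, q_m(x⁻¹) I_{n_m} + R_m x⁻¹) ∈ 𝔤_k*` on
`ℂⁿ`, `n = n₁ + ⋯ + n_m`, with pairwise distinct `q_j(s) ∈ s²ℂ[s]` of degree `≤ k`. -/
structure Setup3 where
  m : ℕ
  hm : 0 < m
  ns : Fin m → ℕ
  n : ℕ
  emb : (Σ j : Fin m, Fin (ns j)) ≃ Fin n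
  k : ℕ
  hk : 0 < k
  q : Fin m → Polynomial ℂ
  hq0 : ∀ j, (q j).coeff 0 = 0
  hq1 : ∀ j, (q j).coeff 1 = 0
  hqdeg : ∀ j, (q j).natDegree ≤ k
  hqdist : ∀ j j', j ≠ j' → q j ≠ q j'
  R : ∀ j : Fin m, Matrix (Fin (ns j)) (Fin (ns j)) ℂ

/-- An element `Σ_{j=1}^k A_j x^{-j}` of `𝔤_k*` is encoded as the polynomial matrix
`Σ_{j=1}^k A_j x^{k-j}` (degree < k); the coadjoint `G_k`-action becomes
conjugation modulo `x^k`. -/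
abbrev PM3 (T : Setup3) := Matrix (Fin T.n) (Fin T.n) (Polynomial ℂ)

/-- All entries have degree `< k`. -/
def degLT3 (T : Setup3) (k : ℕ) (A : PM3 T) : Prop := ∀ a b, (A a b).degree < (k : ℕ)

/-- The HTL normal form `B`, in the polynomial encoding. -/
def Bmat3 (T : Setup3) : PM3 T :=
  Matrix.of fun a b =>
    if h : (T.emb.symm a).1 = (T.emb.symm b).1 then
      (if Fin.cast (by rw [h]) (T.emb.symm a).2 = (T.emb.symm b).2 then
          Polynomial.reflect T.k (T.q (T.emb.symm b).1)
        else 0)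
        + Polynomial.C
            (T.R (T.emb.symm b).1 (Fin.cast (by rw [h]) (T.emb.symm a).2)
              (T.emb.symm b).2)
          * Polynomial.X ^ (T.k - 1)
    else 0

/-- Membership in the truncated orbit `𝒪_B` (conjugation mod `x^k` by an element of
`G_k`, i.e. a polynomial matrix with invertible constant term). -/
def inOrbit3 (T : Setup3) (A : PM3 T) : Prop :=
  degLT3 T T.k A ∧
  ∃ g : PM3 T, IsUnit (g.map fun r => r.coeff 0) ∧
    ∀ a b, (Polynomial.X ^ T.k : Polynomial ℂ) ∣ (g * Bmat3 T - A * g) a b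

/-- Membership in the `G⁰_k`-orbit `𝒪⁰_B` (conjugation mod `x^k` by an element of
`G⁰_k`, i.e. a polynomial matrix with constant term `I_n`). -/
def inOrbitO (T : Setup3) (A : PM3 T) : Prop :=
  degLT3 T T.k A ∧
  ∃ g : PM3 T, (g.map fun r => r.coeff 0) = 1 ∧
    ∀ a b, (Polynomial.X ^ T.k : Polynomial ℂ) ∣ (g * Bmat3 T - A * g) a b

/-- `h` is block diagonal with respect to `ℂⁿ = V₁ ⊕ ⋯ ⊕ V_m`. -/
def blockDiag3 (T : Setup3) (h : Matrix (Fin T.n) (Fin T.n) ℂ) : Prop :=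
  ∀ a b, (T.emb.symm a).1 ≠ (T.emb.symm b).1 → h a b = 0

/-- `Ad_H(𝒪⁰_B) = { h A h⁻¹ : h ∈ H, A ∈ 𝒪⁰_B }`, where
`H = {diag(h₁,…,h_m)} ⊂ GL(n,ℂ)`. -/
def inAdH (T : Setup3) (A : PM3 T) : Prop :=
  ∃ h : (Matrix (Fin T.n) (Fin T.n) ℂ)ˣ, blockDiag3 T h.val ∧
    ∃ A' : PM3 T, inOrbitO T A' ∧
      A = (h.val.map Polynomial.C) * A' * ((h⁻¹).val.map Polynomial.C)

/-- The equivalence relation `(g,A) ∼ (g h⁻¹, h A h⁻¹)` (`h ∈ H`) defining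
`GL(n,ℂ) ×_H Ad_H(𝒪⁰_B)`. -/
def rel17 (T : Setup3) :
    ((Matrix (Fin T.n) (Fin T.n) ℂ)ˣ × {A : PM3 T // inAdH T A}) →
    ((Matrix (Fin T.n) (Fin T.n) ℂ)ˣ × {A : PM3 T // inAdH T A}) → Prop :=
  fun x y =>
    ∃ h : (Matrix (Fin T.n) (Fin T.n) ℂ)ˣ, blockDiag3 T h.val ∧
      y.1 = x.1 * h⁻¹ ∧
      y.2.val = (h.val.map Polynomial.C) * x.2.val * ((h⁻¹).val.map Polynomial.C)

section AssociatedBundle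

variable {L X : Type*} [Group L] (ρ : L →* Equiv.Perm X) (H : Subgroup L) (S : X → Prop)

/-- The relation `(g, a) ∼ (g h⁻¹, ρ(h) a)`, `h ∈ H`, on `L × S`, whose quotient is the associated
bundle `L ×_H S`; here `L` acts on an ambient type containing `S` through `ρ`. -/
def balancedRel (x y : L × {a : X // S a}) : Prop :=
  ∃ h : L, h ∈ H ∧ y.1 = x.1 * h⁻¹ ∧ y.2.val = ρ h x.2.val

theorem exists_bijective_quot_balancedRel {O : X → Prop}
    (hSO : ∀ l a, S a → O (ρ l a)) (hOS : ∀ x, O x → ∃ l a, S a ∧ x = ρ l a)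
    (hH : ∀ l a, S a → S (ρ l a) → l ∈ H) :
    ∃ Φ : Quot (balancedRel ρ H S) → {a : X // O a},
      Function.Bijective Φ ∧ ∀ x : L × {a : X // S a}, (Φ (Quot.mk _ x)).val = ρ x.1 x.2.val := by
  refine ⟨Quot.lift (fun x ↦ ⟨ρ x.1 x.2.val, hSO _ _ x.2.2⟩) ?_, ⟨?_, ?_⟩, fun _ ↦ rfl⟩
  · rintro ⟨g, a⟩ ⟨g', a'⟩ ⟨h, -, hg, ha⟩
    dsimp only at hg ha
    simp [hg, ha]
  · rintro ⟨g, a⟩ ⟨g', a'⟩ hxy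
    have ha : ρ g a.val = ρ g' a'.val := congrArg Subtype.val hxy
    have ha' : a'.val = ρ (g'⁻¹ * g) a.val := by simp [ha]
    exact Quot.sound ⟨g'⁻¹ * g, hH _ a.val a.2 (ha' ▸ a'.2), by group, ha'⟩
  · rintro ⟨x, hx⟩
    obtain ⟨l, a, ha, rfl⟩ := hOS x hx
    exact ⟨Quot.mk _ (l, ⟨a, ha⟩), rfl⟩

end AssociatedBundle

section BlockDiagonal

variable {R n α : Type*} [CommSemiring R] [Fintype n] [DecidableEq n]

theorem blockDiagonal_iff_forall_commute_diagonal (b : n → α) (M : Matrix n n R) :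
    (∀ i j, b i ≠ b j → M i j = 0) ↔ ∀ d : α → R, Commute M (diagonal (d ∘ b)) := by
  classical
  constructor
  · intro hM d
    ext i j
    rw [mul_diagonal, diagonal_mul, mul_comm]
    by_cases hij : b i = b j
    · simp [hij]
    · simp [hM i j hij]
  · intro hM i j hij
    simpa [mul_diagonal, diagonal_mul, Pi.single_eq_of_ne hij] using
      congrFun₂ (hM (Pi.single (b j) 1)).eq i j

variable (R) in
/-- The Levi subgroup of invertible matrices that are block diagonal for the partition of the index
set into the fibres of `b`. -/
def blockDiagonalSubgroup (b : n → α) : Subgroup (Matrix n n R)ˣ where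
  carrier := {h | ∀ i j, b i ≠ b j → h.val i j = 0}
  one_mem' _ _ hij := one_apply_ne fun h ↦ hij (congrArg b h)
  mul_mem' {g h} hg hh := by
    simp only [Set.mem_ofPred_eq, blockDiagonal_iff_forall_commute_diagonal] at hg hh ⊢
    exact fun d ↦ (hg d).mul_left (hh d)
  inv_mem' {h} hh := by
    simp only [Set.mem_ofPred_eq, blockDiagonal_iff_forall_commute_diagonal] at hh ⊢
    exact fun d ↦ (hh d).units_inv_left

end BlockDiagonal

section TruncatedPolynomials

theorem isUnit_mk_X_pow_of_isUnit_coeff_zero {R : Type*} [CommRing R] {p : R[X]}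
    (hp : IsUnit (p.coeff 0)) (k : ℕ) : IsUnit (AdjoinRoot.mk (X ^ k) p) := by
  have hnil : IsNilpotent (AdjoinRoot.mk (X ^ k : R[X]) (X * p.divX)) :=
    ⟨k, by rw [← map_pow, mul_pow, AdjoinRoot.mk_eq_zero]; exact dvd_mul_right _ _⟩
  have hC : IsUnit (AdjoinRoot.mk (X ^ k) (C (p.coeff 0))) := (hp.map C).map _
  rw [← p.X_mul_divX_add, map_add]
  exact hnil.isUnit_add_right_of_commute hC (Commute.all _ _)

theorem coeff_zero_eq_zero_of_X_pow_dvd_mul {R : Type*} [CommRing R] [IsDomain R] {m : ℕ}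
    {f g : R[X]} (hfg : X ^ m ∣ f * g) (hg : ¬ X ^ m ∣ g) : f.coeff 0 = 0 := by
  contrapose! hg
  exact prime_X.pow_dvd_of_dvd_mul_left m (mt X_dvd_iff.1 hg) hfg

theorem eq_zero_of_X_pow_dvd_reflect {R : Type*} [Semiring R] {k : ℕ} {p : R[X]}
    (hdeg : p.natDegree ≤ k) (h0 : p.coeff 0 = 0) (h1 : p.coeff 1 = 0)
    (hp : X ^ (k - 1) ∣ reflect k p) : p = 0 := by
  ext i
  rw [coeff_zero]
  rcases (by omega : i = 0 ∨ i = 1 ∨ k < i ∨ (2 ≤ i ∧ i ≤ k)) with rfl | rfl | hi | ⟨h2, hk⟩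
  · exact h0
  · exact h1
  · exact coeff_eq_zero_of_natDegree_lt (hdeg.trans_lt hi)
  · simpa [coeff_reflect, revAt_le, Nat.sub_sub_self hk] using
      X_pow_dvd_iff.1 hp (k - i) (by omega)

end TruncatedPolynomials

section TruncatedMatrices

variable {R n : Type*} [CommRing R] [Fintype n] [DecidableEq n]

variable (R n) in
/-- The embedding of constant matrices; on invertible ones it induces `GL(n) ⊂ G_k`. -/
abbrev constMatrix : Matrix n n R →+* Matrix n n R[X] := (C : R →+* R[X]).mapMatrix

variable (R n) in
/-- The constant term `g ↦ g(0)` of a polynomial matrix. -/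
abbrev constTerm : Matrix n n R[X] →+* Matrix n n R := (constantCoeff : R[X] →+* R).mapMatrix

variable (R n) in
/-- Reduction of polynomial matrices modulo `x^k`; the units of the target are the group `G_k`. -/
def reduce (k : ℕ) : Matrix n n R[X] →+* Matrix n n (AdjoinRoot (X ^ k : R[X])) :=
  (AdjoinRoot.mk (X ^ k)).mapMatrix

theorem constTerm_constMatrix (M : Matrix n n R) : constTerm R n (constMatrix R n M) = M := by
  ext i j
  simp

theorem reduce_eq_reduce_iff {k : ℕ} {M N : Matrix n n R[X]} :
    reduce R n k M = reduce R n k N ↔ ∀ i j, X ^ k ∣ (M - N) i j := by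
  simp [reduce, ← Matrix.ext_iff, AdjoinRoot.mk_eq_mk]

theorem semiconjBy_reduce_iff {k : ℕ} {g A B : Matrix n n R[X]} :
    SemiconjBy (reduce R n k g) (reduce R n k B) (reduce R n k A) ↔
      ∀ i j, X ^ k ∣ (g * B - A * g) i j := by
  rw [SemiconjBy, ← map_mul, ← map_mul, reduce_eq_reduce_iff]

theorem reduce_surjective (k : ℕ) : Function.Surjective (reduce R n k) := by
  intro M
  choose N hN using fun i j ↦ AdjoinRoot.mk_surjective (M i j)
  exact ⟨of N, Matrix.ext hN⟩

theorem reduce_eq_reduce_of_le {m k : ℕ} (hmk : m ≤ k) {M N : Matrix n n R[X]}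
    (h : reduce R n k M = reduce R n k N) : reduce R n m M = reduce R n m N :=
  reduce_eq_reduce_iff.2 fun i j ↦ (pow_dvd_pow X hmk).trans (reduce_eq_reduce_iff.1 h i j)

theorem constTerm_eq_of_reduce_eq {k : ℕ} (hk : k ≠ 0) {M N : Matrix n n R[X]}
    (h : reduce R n k M = reduce R n k N) : constTerm R n M = constTerm R n N := by
  ext i j
  have hX : X ∣ (M - N) i j := (dvd_pow_self X hk).trans (reduce_eq_reduce_iff.1 h i j)
  simpa [X_dvd_iff, sub_eq_zero] using hX

theorem isUnit_reduce {g : Matrix n n R[X]} (hg : IsUnit (constTerm R n g)) (k : ℕ) :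
    IsUnit (reduce R n k g) := by
  rw [isUnit_iff_isUnit_det, ← RingHom.map_det, constantCoeff_apply] at hg
  rw [isUnit_iff_isUnit_det, reduce, ← RingHom.map_det]
  exact isUnit_mk_X_pow_of_isUnit_coeff_zero hg k

theorem exists_commute_of_semiconjBy {k : ℕ} (hk : k ≠ 0) {g g' A B : Matrix n n R[X]}
    (hg' : IsUnit (constTerm R n g'))
    (h : SemiconjBy (reduce R n k g) (reduce R n k B) (reduce R n k A))
    (h' : SemiconjBy (reduce R n k g') (reduce R n k B) (reduce R n k A)) :
    ∃ P, constTerm R n g' * constTerm R n P = constTerm R n g ∧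
      Commute (reduce R n k P) (reduce R n k B) := by
  obtain ⟨u, hu⟩ := isUnit_reduce hg' k
  obtain ⟨P, hP⟩ := reduce_surjective k (u⁻¹.val * reduce R n k g)
  refine ⟨P, ?_, ?_⟩
  · rw [← map_mul]
    apply constTerm_eq_of_reduce_eq hk
    rw [map_mul, hP, ← hu, Units.mul_inv_cancel_left]
  · rw [← hu] at h'
    rw [hP]
    exact h'.units_inv_symm_left.mul_left h

theorem coeff_zero_eq_zero_of_commute_diagonal [IsDomain R] {m : ℕ} {P : Matrix n n R[X]}
    {d : n → R[X]} (hP : Commute (reduce R n m P) (reduce R n m (diagonal d))) {i j : n}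
    (hij : ¬ X ^ m ∣ d j - d i) : (P i j).coeff 0 = 0 := by
  have hPd : reduce R n m (P * diagonal d) = reduce R n m (diagonal d * P) := by
    rw [map_mul, map_mul, hP.eq]
  have hdvd : X ^ m ∣ P i j * (d j - d i) := by
    simpa [mul_sub, mul_comm (d i)] using reduce_eq_reduce_iff.1 hPd i j
  exact coeff_zero_eq_zero_of_X_pow_dvd_mul hdvd hij

end TruncatedMatrices

section TruncatedOrbits

variable {R n : Type*} [CommRing R] [Fintype n] [DecidableEq n] {k : ℕ}
  {H : Subgroup (Matrix n n R)ˣ} {A B : Matrix n n R[X]}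

variable (R n) in
/-- The action of `GL(n)` on polynomial matrices by conjugation. -/
def constConj : (Matrix n n R)ˣ →* Equiv.Perm (Matrix n n R[X]) :=
  (MulAction.toPermHom (ConjAct (Matrix n n R[X])ˣ) (Matrix n n R[X])).comp
    (ConjAct.toConjAct.toMonoidHom.comp (Units.map (constMatrix R n : _ →* _)))

theorem constConj_apply (l : (Matrix n n R)ˣ) (A : Matrix n n R[X]) :
    constConj R n l A = constMatrix R n l.val * A * constMatrix R n l⁻¹.val :=
  rfl

theorem semiconjBy_constConj (l : (Matrix n n R)ˣ) (A : Matrix n n R[X]) :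
    SemiconjBy (constMatrix R n l.val) A (constConj R n l A) := by
  rw [SemiconjBy, constConj_apply, mul_assoc, ← map_mul, Units.inv_mul, map_one, mul_one]

theorem semiconjBy_reduce_constMatrix_mul {g : Matrix n n R[X]}
    (hg : SemiconjBy (reduce R n k g) (reduce R n k B) (reduce R n k A)) (l : (Matrix n n R)ˣ) :
    SemiconjBy (reduce R n k (constMatrix R n l.val * g)) (reduce R n k B)
      (reduce R n k (constConj R n l A)) := by
  rw [map_mul]
  exact ((semiconjBy_constConj l A).map (reduce R n k)).mul_left hg

theorem degree_constConj_lt (hA : ∀ i j, (A i j).degree < k) (l : (Matrix n n R)ˣ) (i j : n) :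
    (constConj R n l A i j).degree < k := by
  simp only [← mem_degreeLT] at hA ⊢
  simp only [constConj_apply, mul_apply, RingHom.mapMatrix_apply, map_apply]
  refine Submodule.sum_mem _ fun s _ ↦ ?_
  rw [mul_comm, ← smul_eq_C_mul]
  refine Submodule.smul_mem _ _ (Submodule.sum_mem _ fun t _ ↦ ?_)
  rw [← smul_eq_C_mul]
  exact Submodule.smul_mem _ _ (hA t s)

/-- The conjugates of `B` modulo `x^k` by the elements of `G_k` whose constant term lies in `H`,
each represented by its polynomial matrix of degree `< k`.  The subgroups `⊤` and `⊥` give the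
orbits of `G_k` and `G⁰_k`. -/
def truncOrbit (k : ℕ) (H : Subgroup (Matrix n n R)ˣ) (B : Matrix n n R[X]) :
    Set (Matrix n n R[X]) :=
  {A | (∀ i j, (A i j).degree < k) ∧ ∃ g : Matrix n n R[X], (∃ u ∈ H, constTerm R n g = u.val) ∧
    SemiconjBy (reduce R n k g) (reduce R n k B) (reduce R n k A)}

theorem truncOrbit_mono {H' : Subgroup (Matrix n n R)ˣ} (hH : H ≤ H') :
    truncOrbit k H B ⊆ truncOrbit k H' B := by
  rintro A ⟨hdeg, g, ⟨u, hu, hgu⟩, hg⟩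
  exact ⟨hdeg, g, ⟨u, hH hu, hgu⟩, hg⟩

theorem mem_truncOrbit_iff_exists_constConj :
    A ∈ truncOrbit k H B ↔ ∃ h ∈ H, ∃ A' ∈ truncOrbit k ⊥ B, A = constConj R n h A' := by
  constructor
  · rintro ⟨hdeg, g, ⟨u, hu, hgu⟩, hg⟩
    refine ⟨u, hu, constConj R n u⁻¹ A, ⟨degree_constConj_lt hdeg _, constMatrix R n u⁻¹.val * g,
      ⟨1, one_mem _, ?_⟩, semiconjBy_reduce_constMatrix_mul hg _⟩, by simp⟩
    rw [map_mul, constTerm_constMatrix, hgu, Units.inv_mul, Units.val_one]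
  · rintro ⟨h, hh, A', ⟨hdeg, g, ⟨u, hu, hgu⟩, hg⟩, rfl⟩
    refine ⟨degree_constConj_lt hdeg h, constMatrix R n h.val * g, ⟨h, hh, ?_⟩,
      semiconjBy_reduce_constMatrix_mul hg h⟩
    rw [map_mul, constTerm_constMatrix, hgu, Subgroup.mem_bot.1 hu, Units.val_one, mul_one]

theorem constConj_mem_truncOrbit_top (hA : A ∈ truncOrbit k H B) (l : (Matrix n n R)ˣ) :
    constConj R n l A ∈ truncOrbit k ⊤ B := by
  obtain ⟨h, -, A', hA', rfl⟩ := mem_truncOrbit_iff_exists_constConj.1 hA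
  refine mem_truncOrbit_iff_exists_constConj.2 ⟨l * h, Subgroup.mem_top _, A', hA', ?_⟩
  rw [map_mul, Equiv.Perm.mul_apply]

theorem mem_of_constConj_mem_truncOrbit (hk : k ≠ 0)
    (hstab : ∀ (P : Matrix n n R[X]) (u : (Matrix n n R)ˣ), constTerm R n P = u.val →
      Commute (reduce R n k P) (reduce R n k B) → u ∈ H)
    {l : (Matrix n n R)ˣ} (hA : A ∈ truncOrbit k H B)
    (hlA : constConj R n l A ∈ truncOrbit k H B) : l ∈ H := by
  obtain ⟨-, g, ⟨u, hu, hgu⟩, hg⟩ := hA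
  obtain ⟨-, g', ⟨u', hu', hgu'⟩, hg'⟩ := hlA
  obtain ⟨P, hP, hPB⟩ := exists_commute_of_semiconjBy hk (hgu' ▸ u'.isUnit)
    (semiconjBy_reduce_constMatrix_mul hg l) hg'
  have hPu : constTerm R n P = (u'⁻¹ * (l * u)).val := by
    rw [Units.val_mul, ← Units.mul_right_inj u', Units.mul_inv_cancel_left, ← hgu', hP, map_mul,
      constTerm_constMatrix, hgu, Units.val_mul]
  have hmem : u'⁻¹ * (l * u) ∈ H := hstab P _ hPu hPB
  rwa [H.mul_mem_cancel_left (inv_mem hu'), H.mul_mem_cancel_right hu] at hmem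

theorem exists_bijective_quot_truncOrbit (hk : k ≠ 0)
    (hstab : ∀ (P : Matrix n n R[X]) (u : (Matrix n n R)ˣ), constTerm R n P = u.val →
      Commute (reduce R n k P) (reduce R n k B) → u ∈ H) :
    ∃ Φ : Quot (balancedRel (constConj R n) H (· ∈ truncOrbit k H B)) →
        {A // A ∈ truncOrbit k ⊤ B},
      Function.Bijective Φ ∧ ∀ x, (Φ (Quot.mk _ x)).val = constConj R n x.1 x.2.val := by
  refine exists_bijective_quot_balancedRel _ _ _ (fun l A hA ↦ constConj_mem_truncOrbit_top hA l)
    (fun A hA ↦ ?_) (fun l A ↦ mem_of_constConj_mem_truncOrbit hk hstab)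
  obtain ⟨l, -, A', hA', rfl⟩ := mem_truncOrbit_iff_exists_constConj.1 hA
  exact ⟨l, A', truncOrbit_mono bot_le hA', rfl⟩

end TruncatedOrbits

section HTLNormalForm

variable (T : Setup3)

/-- The index `j` of the block `V_j` containing the `a`-th basis vector. -/
def blockIndex (a : Fin T.n) : Fin T.m := (T.emb.symm a).1

/-- The subgroup `H ⊂ GL(n,ℂ)` of the matrices `diag(h_1,…,h_m)`. -/
abbrev leviSubgroup : Subgroup (Matrix (Fin T.n) (Fin T.n) ℂ)ˣ :=
  blockDiagonalSubgroup ℂ (blockIndex T)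

theorem reduce_Bmat3 : reduce ℂ (Fin T.n) (T.k - 1) (Bmat3 T) =
    reduce ℂ (Fin T.n) (T.k - 1) (diagonal fun a ↦ reflect T.k (T.q (blockIndex T a))) := by
  refine reduce_eq_reduce_iff.2 fun a b ↦ ?_
  by_cases hab : a = b
  · simp [hab, Bmat3, blockIndex]
  · rw [Matrix.sub_apply, diagonal_apply_ne _ hab, sub_zero, Bmat3, of_apply]
    split_ifs with hblock hpos
    · have hsnd := (Fin.heq_ext_iff (congrArg T.ns hblock)).2 (congrArg Fin.val hpos)
      exact absurd (T.emb.symm.injective (Sigma.ext hblock hsnd)) hab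
    all_goals simp

theorem not_X_pow_dvd_reflect_sub_reflect {i j : Fin T.m} (hij : i ≠ j) :
    ¬ X ^ (T.k - 1) ∣ reflect T.k (T.q j) - reflect T.k (T.q i) := by
  rw [← reflect_sub]
  intro hdvd
  have hdeg : (T.q j - T.q i).natDegree ≤ T.k :=
    (natDegree_sub_le _ _).trans (max_le (T.hqdeg j) (T.hqdeg i))
  have hzero := eq_zero_of_X_pow_dvd_reflect hdeg (by simp [T.hq0]) (by simp [T.hq1]) hdvd
  exact T.hqdist j i hij.symm (sub_eq_zero.1 hzero)

theorem mem_leviSubgroup_of_commute {P : PM3 T} {u : (Matrix (Fin T.n) (Fin T.n) ℂ)ˣ}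
    (hu : constTerm ℂ (Fin T.n) P = u.val)
    (hP : Commute (reduce ℂ (Fin T.n) T.k P) (reduce ℂ (Fin T.n) T.k (Bmat3 T))) :
    u ∈ leviSubgroup T := by
  have hP' : Commute (reduce ℂ (Fin T.n) (T.k - 1) P) (reduce ℂ (Fin T.n) (T.k - 1) (Bmat3 T)) := by
    rw [commute_iff_eq, ← map_mul, ← map_mul] at hP ⊢
    exact reduce_eq_reduce_of_le (Nat.sub_le _ _) hP
  rw [reduce_Bmat3] at hP'
  intro a b hab
  rw [← hu]
  exact coeff_zero_eq_zero_of_commute_diagonal hP' (not_X_pow_dvd_reflect_sub_reflect T hab)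

theorem inOrbit3_iff_mem_truncOrbit (A : PM3 T) :
    inOrbit3 T A ↔ A ∈ truncOrbit T.k ⊤ (Bmat3 T) := by
  refine and_congr_right fun _ ↦ exists_congr fun g ↦ ?_
  rw [semiconjBy_reduce_iff]
  refine and_congr_left fun _ ↦ ⟨fun ⟨u, hu⟩ ↦ ⟨u, Subgroup.mem_top u, hu.symm⟩, ?_⟩
  rintro ⟨u, -, hu⟩
  exact ⟨u, hu.symm⟩

theorem inOrbitO_iff_mem_truncOrbit (A : PM3 T) :
    inOrbitO T A ↔ A ∈ truncOrbit T.k ⊥ (Bmat3 T) := by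
  refine and_congr_right fun _ ↦ exists_congr fun g ↦ ?_
  rw [semiconjBy_reduce_iff]
  simp only [Subgroup.mem_bot, exists_eq_left]
  rfl

theorem inAdH_iff_mem_truncOrbit (A : PM3 T) :
    inAdH T A ↔ A ∈ truncOrbit T.k (leviSubgroup T) (Bmat3 T) := by
  rw [mem_truncOrbit_iff_exists_constConj]
  simp only [← inOrbitO_iff_mem_truncOrbit]
  rfl

end HTLNormalForm

/-- The map `(g,A) ↦ g A g⁻¹` induces a well-defined bijection
`GL(n,ℂ) ×_H Ad_H(𝒪⁰_B) → 𝒪_B`. -/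
theorem statement17 (T : Setup3) :
    ∃ Φ : Quot (rel17 T) → {A : PM3 T // inOrbit3 T A},
      Function.Bijective Φ ∧
      ∀ x : (Matrix (Fin T.n) (Fin T.n) ℂ)ˣ × {A : PM3 T // inAdH T A},
        (Φ (Quot.mk (rel17 T) x)).val =
          (x.1.val.map Polynomial.C) * x.2.val * ((x.1⁻¹).val.map Polynomial.C) := by
  have hAdH : inAdH T = (· ∈ truncOrbit T.k (leviSubgroup T) (Bmat3 T)) :=
    funext fun A ↦ propext (inAdH_iff_mem_truncOrbit T A)
  have hOrbit : inOrbit3 T = (· ∈ truncOrbit T.k ⊤ (Bmat3 T)) :=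
    funext fun A ↦ propext (inOrbit3_iff_mem_truncOrbit T A)
  change ∃ Φ : Quot (balancedRel (constConj ℂ (Fin T.n)) (leviSubgroup T) (inAdH T)) →
      {A : PM3 T // inOrbit3 T A}, Function.Bijective Φ ∧
        ∀ x, (Φ (Quot.mk _ x)).val = constConj ℂ (Fin T.n) x.1 x.2.val
  rw [hAdH, hOrbit]
  exact exists_bijective_quot_truncOrbit T.hk.ne' fun _ _ ↦ mem_leviSubgroup_of_commute T

end

end DS3
end

section
/- An element g ∈ G^o_k preserves B + (𝔲_1^+ ⊕ 𝔲_1^−)x^{−1}, i.e. g^{−1}bg ∈ B + (𝔲_1^+ ⊕ 𝔲_1^−)x^{−1} for every b ∈ B + (𝔲_1^+ ⊕ 𝔲_1^−)x^{−1}, if and only if g ∈ H_k = {I_n + Σ_{i=1}^{k−1} h_i x^i : h_i ∈ 𝔥_{i+1} for i = 1,…,k−1}, where 𝔥_k = M(n,ℂ). -/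
open Polynomial Matrix

namespace DS3

noncomputable section

/-- Blocks `j` and `j'` lie in the same simultaneous invariant subspace
`V_{⟨t,·⟩}` of `(B_{t+1},…,B_k)` iff the coefficients of `q_j` and `q_{j'}` agree
in all degrees `> t`. -/
def simRel (T : Setup3) (t : ℕ) (j j' : Fin T.m) : Prop :=
  ∀ l : ℕ, t < l → (T.q j).coeff l = (T.q j').coeff l

/-- Membership in `B + (𝔲₁⁺ ⊕ 𝔲₁⁻) x⁻¹`: the off-block-diagonal perturbations of
the residue term of `B`. -/
def inBU (T : Setup3) (b : PM3 T) : Prop :=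
  ∃ U : Matrix (Fin T.n) (Fin T.n) ℂ,
    (∀ a c, (T.emb.symm a).1 = (T.emb.symm c).1 → U a c = 0) ∧
    b = Bmat3 T + Matrix.of fun a c => Polynomial.C (U a c) * Polynomial.X ^ (T.k - 1)

/-!
Write `B = D + R x⁻¹` with `D` the scalar-diagonal irregular part. For `g` with constant term `1`,
conjugation by `g` does not change the residue terms `U x⁻¹`, so `g (B + U' x⁻¹) = (B + U x⁻¹) g`
reads `[g, D] = (U - U') x⁻¹` in `𝔤_k*`. Its `(a, c)` entry is `g_ac (D_c - D_a)`, so the equation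
can be solved for `U'` iff no such product has a pole of order `> 1`; the solution `U'` stays off
the diagonal blocks because `D` is scalar on each of them. Over a domain, orders of vanishing add,
and the order of vanishing of `D_c - D_a` is what `simRel` measures.
-/

section Divisibility

lemma X_pow_dvd_mul_iff {R : Type*} [CommSemiring R] [NoZeroDivisors R] {n : ℕ} {p q : R[X]} :
    X ^ n ∣ p * q ↔ ∀ i, p.coeff i ≠ 0 → X ^ (n - i) ∣ q := by
  constructor
  · intro h i hi
    rcases eq_or_ne q 0 with rfl | hq
    · exact dvd_zero _
    have hp : p ≠ 0 := fun hp => hi (by rw [hp, coeff_zero])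
    have n_le : n ≤ p.natTrailingDegree + q.natTrailingDegree := by
      rw [← natTrailingDegree_mul hp hq]
      by_contra! hlt
      exact mul_ne_zero hp hq (coeff_natTrailingDegree_eq_zero.mp (X_pow_dvd_iff.mp h _ hlt))
    have le_i := natTrailingDegree_le_of_ne_zero hi
    exact X_pow_dvd_iff.mpr fun d hd => coeff_eq_zero_of_lt_natTrailingDegree (by omega)
  · intro h
    rcases eq_or_ne p 0 with rfl | hp
    · rw [zero_mul]
      exact dvd_zero _
    have hp_dvd : X ^ p.natTrailingDegree ∣ p :=
      X_pow_dvd_iff.mpr fun _ => coeff_eq_zero_of_lt_natTrailingDegree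
    have hq_dvd := h p.natTrailingDegree (mt coeff_natTrailingDegree_eq_zero.mp hp)
    refine (pow_dvd_pow X ?_).trans (pow_add (X : R[X]) _ _ ▸ mul_dvd_mul hp_dvd hq_dvd)
    omega

lemma X_pow_succ_dvd_add_C_mul_X_pow_iff {R : Type*} [Ring R] {n : ℕ} {p : R[X]} {r : R} :
    X ^ (n + 1) ∣ p + C r * X ^ n ↔ X ^ n ∣ p ∧ p.coeff n + r = 0 := by
  simp only [X_pow_dvd_iff, coeff_add, coeff_C_mul_X_pow, Nat.forall_lt_succ_right, if_true]
  refine and_congr_left' (forall₂_congr fun d hd => ?_)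
  rw [if_neg hd.ne, add_zero]

lemma X_dvd_sub_one_of_map_coeff_zero {R ι : Type*} [Ring R] [DecidableEq ι] {g : Matrix ι ι R[X]}
    (hg : g.map (fun r => r.coeff 0) = 1) (i j : ι) : X ∣ (g - 1) i j := by
  have hij : (g i j).coeff 0 = (1 : Matrix ι ι R) i j := congrFun₂ hg i j
  rw [X_dvd_iff, Matrix.sub_apply, coeff_sub, hij]
  rcases eq_or_ne i j with rfl | h
  · simp
  · simp [h]

lemma mul_dvd_mul_apply {R l m n : Type*} [CommSemiring R] [Fintype m] {x y : R}
    {M : Matrix l m R} {N : Matrix m n R} (hM : ∀ i j, x ∣ M i j) (hN : ∀ i j, y ∣ N i j)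
    (i : l) (j : n) : x * y ∣ (M * N) i j :=
  Finset.dvd_sum fun k _ => mul_dvd_mul (hM i k) (hN k j)

/- Only `g - 1` moves `S` and `S'`, and it does so by multiples of `x * y`. -/
lemma mul_dvd_intertwiner_apply_iff {R ι : Type*} [CommRing R] [Fintype ι] [DecidableEq ι]
    {x y : R} {g S S' : Matrix ι ι R} (d : ι → R) (hg : ∀ i j, x ∣ (g - 1) i j)
    (hS : ∀ i j, y ∣ S i j) (hS' : ∀ i j, y ∣ S' i j) (a c : ι) :
    x * y ∣ (g * (diagonal d + S') - (diagonal d + S) * g) a c ↔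
      x * y ∣ g a c * (d c - d a) + (S' a c - S a c) := by
  have decomposition : g * (diagonal d + S') - (diagonal d + S) * g =
      (g * diagonal d - diagonal d * g) + (S' - S) + ((g - 1) * S' - S * (g - 1)) := by
    noncomm_ring
  have higher_order : x * y ∣ ((g - 1) * S' - S * (g - 1)) a c :=
    dvd_sub (mul_dvd_mul_apply hg hS' a c) (mul_comm y x ▸ mul_dvd_mul_apply hS hg a c)
  rw [decomposition, Matrix.add_apply, dvd_add_left higher_order, Matrix.add_apply,
    Matrix.sub_apply, Matrix.sub_apply, mul_diagonal, diagonal_mul, mul_sub, mul_comm (d a)]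

end Divisibility

section NormalForm

variable (T : Setup3)

/-- The diagonal entries of the irregular part of `B`: on the block `V_j` it is the scalar
`q_j(x⁻¹)`, which becomes `x ^ k q_j(x⁻¹)` in the polynomial encoding. -/
def irregularPart (a : Fin T.n) : ℂ[X] :=
  reflect T.k (T.q (T.emb.symm a).1)

/-- The residue `B₁ = diag(R₁, …, R_m)` of `B`. -/
def residue : Matrix (Fin T.n) (Fin T.n) ℂ :=
  (blockDiagonal' T.R).submatrix T.emb.symm T.emb.symm

/-- The residue term `U x⁻¹` of `𝔤_k*`, encoded as the polynomial matrix `U x ^ (k - 1)`. -/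
def residueTerm (U : Matrix (Fin T.n) (Fin T.n) ℂ) : PM3 T :=
  Matrix.of fun a c => C (U a c) * X ^ (T.k - 1)

lemma residueTerm_add (U V : Matrix (Fin T.n) (Fin T.n) ℂ) :
    residueTerm T (U + V) = residueTerm T U + residueTerm T V := by
  ext1 a c
  simp only [residueTerm, Matrix.of_apply, Matrix.add_apply, C_add, add_mul]

lemma X_pow_dvd_residueTerm_apply (U : Matrix (Fin T.n) (Fin T.n) ℂ) (a c : Fin T.n) :
    X ^ (T.k - 1) ∣ residueTerm T U a c :=
  dvd_mul_left _ _

lemma Bmat3_eq_diagonal_add_residueTerm :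
    Bmat3 T = diagonal (irregularPart T) + residueTerm T (residue T) := by
  ext1 a c
  simp only [Bmat3, residueTerm, residue, irregularPart, Matrix.of_apply, Matrix.add_apply,
    submatrix_apply, diagonal_apply, ← T.emb.symm.apply_eq_iff_eq (x := a)]
  -- The casts depend on `a` and `c`, so their proofs are abstracted before the indices are.
  generalize_proofs ns_eq
  generalize T.emb.symm a = s, T.emb.symm c = t at ns_eq ⊢
  obtain ⟨j, s⟩ := s
  obtain ⟨j', t⟩ := t
  rcases eq_or_ne j j' with rfl | hj
  · simp
  · simp [hj, blockDiagonal'_apply_ne]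

lemma inBU_iff_exists_residueTerm {b : PM3 T} :
    inBU T b ↔ ∃ U : Matrix (Fin T.n) (Fin T.n) ℂ,
      (∀ a c, (T.emb.symm a).1 = (T.emb.symm c).1 → U a c = 0) ∧ b = Bmat3 T + residueTerm T U :=
  Iff.rfl

lemma coeff_irregularPart {a : Fin T.n} {l : ℕ} (hl : l ≤ T.k) :
    (irregularPart T a).coeff l = (T.q (T.emb.symm a).1).coeff (T.k - l) := by
  rw [irregularPart, coeff_reflect, revAt_le hl]

lemma simRel_iff_X_pow_dvd {t : ℕ} {a c : Fin T.n} :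
    simRel T t (T.emb.symm a).1 (T.emb.symm c).1 ↔
      X ^ (T.k - t) ∣ irregularPart T c - irregularPart T a := by
  rw [X_pow_dvd_iff]
  constructor
  · intro h d hd
    rw [coeff_sub, coeff_irregularPart T (by omega), coeff_irregularPart T (by omega),
      h (T.k - d) (by omega), sub_self]
  · intro h l hl
    rcases le_or_gt l T.k with hlk | hlk
    · have coeff_eq := sub_eq_zero.mp ((coeff_sub _ _ _).symm.trans (h (T.k - l) (by omega)))
      rw [coeff_irregularPart T (by omega), coeff_irregularPart T (by omega),
        Nat.sub_sub_self hlk] at coeff_eq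
      exact coeff_eq.symm
    · rw [coeff_eq_zero_of_natDegree_lt ((T.hqdeg _).trans_lt hlk),
        coeff_eq_zero_of_natDegree_lt ((T.hqdeg _).trans_lt hlk)]

end NormalForm

section Stabilizer

variable {T : Setup3} {g : PM3 T}

lemma X_pow_dvd_intertwiner_apply_iff (hg : g.map (fun r => r.coeff 0) = 1)
    (U U' : Matrix (Fin T.n) (Fin T.n) ℂ) (a c : Fin T.n) :
    X ^ T.k ∣ (g * (Bmat3 T + residueTerm T U') - (Bmat3 T + residueTerm T U) * g : PM3 T) a c ↔
      X ^ (T.k - 1) ∣ g a c * (irregularPart T c - irregularPart T a) ∧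
        (g a c * (irregularPart T c - irregularPart T a)).coeff (T.k - 1) +
          (U' a c - U a c) = 0 := by
  have residueTerm_sub : residueTerm T (residue T + U') a c - residueTerm T (residue T + U) a c =
      C (U' a c - U a c) * X ^ (T.k - 1) := by
    simp only [residueTerm, Matrix.of_apply, Matrix.add_apply, ← sub_mul, ← C_sub,
      add_sub_add_left_eq_sub]
  rw [← X_pow_succ_dvd_add_C_mul_X_pow_iff, Nat.sub_add_cancel T.hk, ← residueTerm_sub,
    Bmat3_eq_diagonal_add_residueTerm, add_assoc, add_assoc, ← residueTerm_add, ← residueTerm_add,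
    ← mul_pow_sub_one T.hk.ne' X]
  exact mul_dvd_intertwiner_apply_iff _ (X_dvd_sub_one_of_map_coeff_zero hg)
    (X_pow_dvd_residueTerm_apply T _) (X_pow_dvd_residueTerm_apply T _) a c

lemma preserves_iff_X_pow_dvd (hg : g.map (fun r => r.coeff 0) = 1) :
    (∀ b : PM3 T, inBU T b → ∃ b' : PM3 T, inBU T b' ∧ ∀ a c, X ^ T.k ∣ (g * b' - b * g) a c) ↔
      ∀ a c, X ^ (T.k - 1) ∣ g a c * (irregularPart T c - irregularPart T a) := by
  simp only [inBU_iff_exists_residueTerm]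
  constructor
  · intro h a c
    obtain ⟨_, ⟨U', -, rfl⟩, hU'⟩ := h _ ⟨0, fun _ _ _ => rfl, rfl⟩
    exact ((X_pow_dvd_intertwiner_apply_iff hg 0 U' a c).mp (hU' a c)).1
  · rintro h _ ⟨U, hU, rfl⟩
    let U' : Matrix (Fin T.n) (Fin T.n) ℂ := Matrix.of fun a c =>
      U a c - (g a c * (irregularPart T c - irregularPart T a)).coeff (T.k - 1)
    have hU' (a c) (hac : (T.emb.symm a).1 = (T.emb.symm c).1) : U' a c = 0 := by
      simp [U', hU a c hac, irregularPart, hac]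
    refine ⟨_, ⟨U', hU', rfl⟩, fun a c => ?_⟩
    exact (X_pow_dvd_intertwiner_apply_iff hg U U' a c).mpr ⟨h a c, by simp [U']⟩

lemma X_pow_dvd_mul_irregularPart_sub_iff (hg : g.map (fun r => r.coeff 0) = 1) {a c : Fin T.n} :
    X ^ (T.k - 1) ∣ g a c * (irregularPart T c - irregularPart T a) ↔
      ∀ i, 1 ≤ i → i ≤ T.k - 1 → ¬ simRel T (i + 1) (T.emb.symm a).1 (T.emb.symm c).1 →
        (g a c).coeff i = 0 := by
  simp only [X_pow_dvd_mul_iff, simRel_iff_X_pow_dvd, Nat.sub_sub, add_comm 1]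
  refine ⟨fun h i _ _ hi => not_imp_comm.mp (h i) hi, fun h i => not_imp_comm.mpr fun hi => ?_⟩
  have i_lt : i + 1 < T.k := by
    by_contra! hk
    rw [Nat.sub_eq_zero_of_le hk, pow_zero] at hi
    exact hi (one_dvd _)
  rcases Nat.eq_zero_or_pos i with rfl | i_pos
  · have hac : a ≠ c := by
      rintro rfl
      rw [sub_self] at hi
      exact hi (dvd_zero _)
    exact (congrFun₂ hg a c).trans (Matrix.one_apply_ne hac)
  · exact h i i_pos (by omega) hi

end Stabilizer

/-- An element `g ∈ G⁰_k` preserves `B + (𝔲₁⁺ ⊕ 𝔲₁⁻) x⁻¹` (i.e. `g⁻¹bg` stays in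
this set for every `b` in it) iff `g ∈ ℋ_k`, i.e. the coefficient of `xⁱ` in `g`
lies in `𝔥_{i+1}` for `i = 1,…,k-1` (where `𝔥_k = M(n,ℂ)`). -/
theorem statement18 (T : Setup3) (hk1 : 1 < T.k) (g : PM3 T)
    (hdeg : degLT3 T T.k g) (hconst : (g.map fun r => r.coeff 0) = 1) :
    (∀ b : PM3 T, inBU T b → ∃ b' : PM3 T, inBU T b' ∧
        ∀ a c, (Polynomial.X ^ T.k : Polynomial ℂ) ∣ (g * b' - b * g) a c) ↔
    (∀ i : ℕ, 1 ≤ i → i ≤ T.k - 1 → ∀ a c,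
        ¬ simRel T (i + 1) (T.emb.symm a).1 (T.emb.symm c).1 →
        (g a c).coeff i = 0) := by
  rw [preserves_iff_X_pow_dvd hconst]
  simp only [X_pow_dvd_mul_irregularPart_sub_iff hconst]
  exact ⟨fun h i hi hik a c => h a c i hi hik, fun h a c i hi hik => h i hi hik a c⟩

end

end DS3
end

section
/- Let A, A′ ∈ M(n,ℂ) satisfy AA′ = A′A and Ker A ∩ Ker A′ = {0}, and let V ⊆ ℂ^n be an A′-invariant subspace. Then dim V − dim A′V = dim AV − dim AA′V. -/
/-!
Since `A` and `A'` commute, `W = V ∩ Ker A` is `A'`-invariant, and `A'` is injective on it, so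
`A'W = W` by finite dimensionality. Hence `W ⊆ A'V ⊆ V`, which gives `A'V ∩ Ker A = W`. By
rank-nullity for `A` restricted to `V` and to `A'V`, both `dim V - dim AV` and
`dim A'V - dim AA'V` are equal to `dim W`.
-/

open Matrix

section Invariant

open Module.End

lemma ker_mem_invtSubmodule_of_commute {R M : Type*} [Semiring R] [AddCommMonoid M] [Module R M]
    {f g : Module.End R M} (h : Commute f g) : LinearMap.ker f ∈ g.invtSubmodule := by
  rw [mem_invtSubmodule, ← LinearMap.ker_comp, ← mul_eq_comp, h.eq]
  exact LinearMap.ker_le_ker_comp f g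

variable {R M : Type*} [Ring R] [AddCommGroup M] [Module R M]

lemma map_eq_self_of_disjoint_ker {g : Module.End R M} {W : Submodule R M} [IsArtinian R W]
    (hW : W ∈ g.invtSubmodule) (hker : Disjoint W (LinearMap.ker g)) : W.map g = W := by
  have hinj : Function.Injective (g.restrict hW) :=
    (LinearMap.injective_restrict_iff hW).mpr hker
  have hsurj := IsArtinian.surjective_of_injective_endomorphism _ hinj
  refine le_antisymm ((mem_invtSubmodule_iff_map_le g).mp hW) fun w hw ↦ ?_
  obtain ⟨v, hv⟩ := hsurj ⟨w, hw⟩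
  exact ⟨v, v.2, congrArg Subtype.val hv⟩

lemma map_inf_eq_inf_of_disjoint_ker {g : Module.End R M} {V N : Submodule R M}
    [IsArtinian R ↥(V ⊓ N)] (hV : V ∈ g.invtSubmodule) (hN : N ∈ g.invtSubmodule)
    (hker : Disjoint (V ⊓ N) (LinearMap.ker g)) : V.map g ⊓ N = V ⊓ N := by
  have hmap : (V ⊓ N).map g = V ⊓ N :=
    map_eq_self_of_disjoint_ker (invtSubmodule.inf_mem hV hN) hker
  apply le_antisymm
  · exact inf_le_inf_right N ((mem_invtSubmodule_iff_map_le g).mp hV)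
  · exact le_inf (hmap.symm.le.trans (Submodule.map_mono inf_le_left)) inf_le_right

end Invariant

lemma finrank_map_add_finrank_inf_ker.{u} {R : Type*} {M : Type u} {N : Type*} [Ring R]
    [HasRankNullity.{u} R] [StrongRankCondition R] [AddCommGroup M] [Module R M]
    [AddCommGroup N] [Module R N] (f : M →ₗ[R] N) (V : Submodule R M) [Module.Finite R V] :
    Module.finrank R (V.map f) + Module.finrank R ↥(V ⊓ LinearMap.ker f) = Module.finrank R V := by
  have h := (LinearMap.ker (f.domRestrict V)).finrank_quotient_add_finrank
  rwa [(f.domRestrict V).quotKerEquivRange.finrank_eq, LinearMap.range_domRestrict,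
    LinearMap.ker_domRestrict, ← Submodule.finrank_map_subtype_eq,
    Submodule.map_comap_subtype] at h

theorem statement19_general {K E F : Type*} [DivisionRing K] [AddCommGroup E] [Module K E]
    [AddCommGroup F] [Module K F] (f : E →ₗ[K] F) (g : Module.End K E) (V : Submodule K E)
    [FiniteDimensional K V] (hf : LinearMap.ker f ∈ g.invtSubmodule) (hV : V ∈ g.invtSubmodule)
    (hker : Disjoint (V ⊓ LinearMap.ker f) (LinearMap.ker g)) :
    (Module.finrank K V : ℤ) - Module.finrank K (V.map g) =
      (Module.finrank K (V.map f) : ℤ) - Module.finrank K ((V.map g).map f) := by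
  have hV_rank := finrank_map_add_finrank_inf_ker f V
  have hgV_rank := finrank_map_add_finrank_inf_ker f (V.map g)
  rw [map_inf_eq_inf_of_disjoint_ker hV hf hker] at hgV_rank
  lia

/-- Let `A, A' ∈ M(n,ℂ)` commute with `Ker A ∩ Ker A' = {0}`, and let `V ⊆ ℂⁿ` be
an `A'`-invariant subspace.  Then `dim V - dim A'V = dim AV - dim AA'V`. -/
theorem statement19 (n : ℕ) (A A' : Matrix (Fin n) (Fin n) ℂ)
    (hcomm : A * A' = A' * A)
    (hker : LinearMap.ker (Matrix.toLin' A) ⊓ LinearMap.ker (Matrix.toLin' A') = ⊥)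
    (V : Submodule ℂ (Fin n → ℂ)) (hV : ∀ v ∈ V, A'.mulVec v ∈ V) :
    (Module.finrank ℂ V : ℤ) - Module.finrank ℂ (V.map (Matrix.toLin' A')) =
      (Module.finrank ℂ (V.map (Matrix.toLin' A)) : ℤ)
        - Module.finrank ℂ ((V.map (Matrix.toLin' A')).map (Matrix.toLin' A)) := by
  have hcomm' : Commute (Matrix.toLin' A) (Matrix.toLin' A') :=
    Commute.map (f := Matrix.toLinAlgEquiv') hcomm
  exact statement19_general _ _ V (ker_mem_invtSubmodule_of_commute hcomm') hV
    ((disjoint_iff.mpr hker).mono_left inf_le_right)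
end
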